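/- arXiv:1602.06817 — 3 statements merged into one kernel-verified Lean document; each statement's English description precedes it below -/
import Mathlib

section
/- Let G be a prime graph containing no induced P6 and no induced bull, and let C be an induced 5-cycle in G. If a vertex with no neighbor on C is adjacent to a vertex outside C having exactly k ≥ 1 neighbors on C, then k = 2. -/
open SimpleGraph

variable {V : Type*}

/-- The vertices `a b c d e` induce a bull in `G` (edges ab, bc, cd, be, ce). -/
def IsBull (G : SimpleGraph V) (a b c d e : V) : Prop :=
  a ≠ b ∧ a ≠ c ∧ a ≠ d ∧ a ≠ e ∧ b ≠ c ∧ b ≠ d ∧ b ≠ e ∧ c ≠ d ∧ c ≠ e ∧ d ≠ e ∧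
  G.Adj a b ∧ G.Adj b c ∧ G.Adj c d ∧ G.Adj b e ∧ G.Adj c e ∧
  ¬ G.Adj a c ∧ ¬ G.Adj a d ∧ ¬ G.Adj a e ∧ ¬ G.Adj b d ∧ ¬ G.Adj d e

/-- `G` contains no induced bull. -/
def BullFree (G : SimpleGraph V) : Prop := ∀ a b c d e : V, ¬ IsBull G a b c d e

/-- `G` contains no induced path on six vertices. -/
def P6Free (G : SimpleGraph V) : Prop :=
  ¬ ∃ p : Fin 6 → V, Function.Injective p ∧
      ∀ i j : Fin 6, G.Adj (p i) (p j) ↔ (i.val + 1 = j.val ∨ j.val + 1 = i.val)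

/-- `c` lists the vertices of an induced 5-cycle in `G` (indices mod 5). -/
def IsInducedC5 (G : SimpleGraph V) (c : Fin 5 → V) : Prop :=
  Function.Injective c ∧ ∀ i j : Fin 5, G.Adj (c i) (c j) ↔ (j = i + 1 ∨ i = j + 1)

/-- `S` is a homogeneous set in `G`. -/
def IsHomogeneous (G : SimpleGraph V) (S : Set V) : Prop :=
  ∀ v ∉ S, (∀ s ∈ S, G.Adj v s) ∨ (∀ s ∈ S, ¬ G.Adj v s)

/-- `S` is a proper homogeneous set: homogeneous, of size at least two, not all of `V`. -/
def IsProperHomogeneous (G : SimpleGraph V) (S : Set V) : Prop :=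
  IsHomogeneous G S ∧ (∃ a ∈ S, ∃ b ∈ S, a ≠ b) ∧ S ≠ Set.univ

/-- A graph is prime if it has no proper homogeneous set. -/
def IsPrimeGraph (G : SimpleGraph V) : Prop := ¬ ∃ S : Set V, IsProperHomogeneous G S

/-- Number of neighbors of `x` on the 5-cycle `c`. -/
def nbrCount (G : SimpleGraph V) [DecidableRel G.Adj] (c : Fin 5 → V) (x : V) : ℕ :=
  (Finset.univ.filter fun i : Fin 5 => G.Adj x (c i)).card

/-!
Let `H` be an induced subgraph of `G` that is prime and not a split graph, such as a 5-cycle. If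
an anticenter of `H` is adjacent to `v`, then bull-freeness of `G` makes every component of the
neighborhood of `v` in `H` homogeneous in `H`; hence this neighborhood is independent unless `v`
is a center. By complementation, if a center of `H` is not adjacent to `v`, then the
non-neighborhood of `v` in `H` is a clique unless `v` is an anticenter. Consequently a center `x`
with a neighbor `z` among the anticenters is adjacent to every vertex `v` that is neither a center
nor an anticenter: otherwise the two facts make `H` split if `z` is adjacent to `v`, and an edge
of `H` leaving the neighborhood of `v` completes a bull if it is not.

If every center has such a neighbor, it follows along the component of the noncenters containing
`H` that every center is complete to this component, which is therefore homogeneous. If some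
center has none, the same argument applies to the complement, where centers and anticenters trade
places. So a prime bull-free `G` cannot have both a center and an anticenter of `H`.

For a 5-cycle, a neighbor `x` of an anticenter is thus not a center, so its neighborhood on the
cycle is independent and has at most two elements; if it had only one, then the anticenter, `x`
and four consecutive vertices of the cycle would induce a `P₆`.
-/

/-- A center of the vertex family `c`: a vertex adjacent to all of it. -/
def IsCenter (G : SimpleGraph V) {W : Type*} (c : W → V) (x : V) : Prop :=
  ∀ w, G.Adj x (c w)

/-- An anticenter of the vertex family `c`: a vertex adjacent to none of it. Membership in the
family is not excluded, so an isolated vertex of the family is one of its anticenters. -/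
def IsAnticenter (G : SimpleGraph V) {W : Type*} (c : W → V) (z : V) : Prop :=
  ∀ w, ¬ G.Adj z (c w)

/-- A split graph: its vertices can be partitioned into a clique and an independent set.
The subgraph carrying a center and an anticenter will be assumed not to be split. -/
def IsSplitGraph (G : SimpleGraph V) : Prop :=
  ∃ K : Set V, G.IsClique K ∧ G.IsIndepSet Kᶜ

/-- The vertex set of the connected component of `a` in the subgraph of `G` induced by `N`, meant
for `a ∈ N`. It consists of the vertices that end a walk from `a` whose later vertices lie in
`N`. Such components are the candidates for homogeneous sets. -/
def componentWithin (G : SimpleGraph V) (N : Set V) (a : V) : Set V :=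
  {v | Relation.ReflTransGen (fun u v => G.Adj u v ∧ v ∈ N) a v}

section Component

variable {G : SimpleGraph V} {N : Set V} {a u v : V}

theorem mem_componentWithin_self : a ∈ componentWithin G N a :=
  Relation.ReflTransGen.refl

theorem mem_componentWithin_of_adj (hu : u ∈ componentWithin G N a) (huv : G.Adj u v)
    (hv : v ∈ N) : v ∈ componentWithin G N a :=
  Relation.ReflTransGen.tail hu ⟨huv, hv⟩

theorem componentWithin_induction {P : V → Prop} (base : P a)
    (step : ∀ u v, P u → G.Adj u v → v ∈ N → P v) : ∀ v ∈ componentWithin G N a, P v := by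
  intro v hv
  induction hv with
  | refl => exact base
  | tail _ huv ih => exact step _ _ ih huv.1 huv.2

theorem componentWithin_subset (ha : a ∈ N) : componentWithin G N a ⊆ N :=
  componentWithin_induction ha fun _ _ _ _ hv => hv

theorem isHomogeneous_componentWithin
    (h : ∀ v ∉ N, (∀ u ∈ componentWithin G N a, G.Adj v u) ∨
      ∀ u ∈ componentWithin G N a, ¬ G.Adj v u) :
    IsHomogeneous G (componentWithin G N a) := by
  intro v hv
  by_cases hvN : v ∈ N
  · exact Or.inr fun u hu hvu => hv (mem_componentWithin_of_adj hu hvu.symm hvN)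
  · exact h v hvN

theorem isHomogeneous_componentWithin_of_forall_adj (ha : a ∈ N)
    (h : ∀ m ∉ N, ∀ u ∈ N, ∀ v ∈ N, G.Adj u v → G.Adj m u → G.Adj m v) :
    IsHomogeneous G (componentWithin G N a) := by
  refine isHomogeneous_componentWithin fun m hm => ?_
  have same : ∀ v ∈ componentWithin G N a, v ∈ N ∧ (G.Adj m v ↔ G.Adj m a) :=
    componentWithin_induction ⟨ha, Iff.rfl⟩ fun u v ⟨hu, hmu⟩ huv hv =>
      ⟨hv, Iff.trans ⟨h m hm v hv u hu huv.symm, h m hm u hu v hv huv⟩ hmu⟩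
  by_cases hma : G.Adj m a
  · exact Or.inl fun v hv => (same v hv).2.2 hma
  · exact Or.inr fun v hv hmv => hma ((same v hv).2.1 hmv)

end Component

section Complement

variable {G : SimpleGraph V}

theorem IsHomogeneous.of_compl {S : Set V} (hS : IsHomogeneous Gᶜ S) : IsHomogeneous G S := by
  intro v hv
  have ne : ∀ s ∈ S, v ≠ s := fun s hs => (ne_of_mem_of_not_mem hs hv).symm
  rcases hS v hv with complete | anticomplete
  · exact Or.inr fun s hs => ((compl_adj ..).1 (complete s hs)).2
  · exact Or.inl fun s hs => by_contra fun h => anticomplete s hs ((compl_adj ..).2 ⟨ne s hs, h⟩)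

theorem IsPrimeGraph.compl (hG : IsPrimeGraph G) : IsPrimeGraph Gᶜ :=
  fun ⟨S, hS, hS'⟩ => hG ⟨S, hS.of_compl, hS'⟩

theorem IsSplitGraph.of_compl (hG : IsSplitGraph Gᶜ) : IsSplitGraph G := by
  obtain ⟨K, hK, hK'⟩ := hG
  refine ⟨Kᶜ, ?_, ?_⟩
  · simpa using hK'
  · simpa using hK

end Complement

section Bull

variable {G : SimpleGraph V} {a b c d e : V}

theorem IsBull.of_adj (hab : G.Adj a b) (hbc : G.Adj b c) (hcd : G.Adj c d)
    (hbe : G.Adj b e) (hce : G.Adj c e) (hac : ¬ G.Adj a c) (had : ¬ G.Adj a d)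
    (hae : ¬ G.Adj a e) (hbd : ¬ G.Adj b d) (hde : ¬ G.Adj d e) : IsBull G a b c d e := by
  refine ⟨hab.ne, ?_, ?_, ?_, hbc.ne, ?_, hbe.ne, hcd.ne, hce.ne, ?_,
    hab, hbc, hcd, hbe, hce, hac, had, hae, hbd, hde⟩
  · rintro rfl; exact had hcd
  · rintro rfl; exact hbd hab.symm
  · rintro rfl; exact hac hce.symm
  · rintro rfl; exact had hab
  · rintro rfl; exact hbd hbe

theorem IsBull.of_compl (h : IsBull Gᶜ a b c d e) : IsBull G b d a c e := by
  simp only [IsBull, compl_adj] at h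
  grind [IsBull, G.adj_comm]

theorem BullFree.compl (hB : BullFree G) : BullFree Gᶜ :=
  fun _ _ _ _ _ h => hB _ _ _ _ _ h.of_compl

end Bull

section PrimeGraph

variable {W : Type*} {H : SimpleGraph W} {S : Set W}

theorem nonempty_of_not_isSplitGraph (hs : ¬ IsSplitGraph H) : Nonempty W := by
  by_contra hW
  have := not_nonempty_iff.1 hW
  exact hs ⟨∅, by simp, by simp [Set.eq_empty_of_isEmpty]⟩

theorem IsPrimeGraph.subsingleton_of_isHomogeneous (hH : IsPrimeGraph H) (hS : IsHomogeneous H S)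
    (hS' : S ≠ Set.univ) : S.Subsingleton := by
  by_contra h
  exact hH ⟨S, hS, Set.not_subsingleton_iff.1 h, hS'⟩

theorem IsPrimeGraph.exists_adj_of_not_isSplitGraph (hH : IsPrimeGraph H) (hs : ¬ IsSplitGraph H)
    (hS : S.Nonempty) (hS' : Sᶜ.Nonempty) : ∃ a ∈ S, ∃ b ∉ S, H.Adj a b := by
  by_contra! h
  have hSss : S.Subsingleton :=
    hH.subsingleton_of_isHomogeneous (fun v hv => Or.inr fun s hs hvs => h s hs v hv hvs.symm)
      (Set.nonempty_compl.1 hS')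
  have hScss : Sᶜ.Subsingleton :=
    hH.subsingleton_of_isHomogeneous (fun v hv => Or.inr (h v (not_not.1 hv)))
      (Set.nonempty_compl.1 (by rwa [compl_compl]))
  exact hs ⟨S, hSss.pairwise _, hScss.pairwise _⟩

theorem IsPrimeGraph.exists_not_adj_of_not_isSplitGraph (hH : IsPrimeGraph H)
    (hs : ¬ IsSplitGraph H) (hS : S.Nonempty) (hS' : Sᶜ.Nonempty) :
    ∃ a ∈ S, ∃ b ∉ S, ¬ H.Adj a b := by
  obtain ⟨a, ha, b, hb, hab⟩ :=
    hH.compl.exists_adj_of_not_isSplitGraph (fun h => hs h.of_compl) hS hS'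
  exact ⟨a, ha, b, hb, ((compl_adj ..).1 hab).2⟩

theorem IsPrimeGraph.exists_adj (hH : IsPrimeGraph H) (hs : ¬ IsSplitGraph H) (a : W) :
    ∃ b, H.Adj a b := by
  obtain ⟨a, rfl, b, -, hab⟩ :=
    hH.exists_adj_of_not_isSplitGraph hs (Set.singleton_nonempty a) <|
      Set.nonempty_compl.2 fun h => hs ⟨{a}, H.isClique_singleton a, by simp [h]⟩
  exact ⟨b, hab⟩

end PrimeGraph

section Center

variable {W : Type*} {G : SimpleGraph V} {c : W → V} {x z : V}

theorem isCenter_compl_iff : IsCenter Gᶜ c z ↔ IsAnticenter G c z ∧ z ∉ Set.range c := by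
  simp only [IsCenter, IsAnticenter, compl_adj, Set.mem_range, not_exists, ← forall_and,
    ne_comm (a := z), and_comm, ne_eq]

theorem IsCenter.isAnticenter_compl (hx : IsCenter G c x) : IsAnticenter Gᶜ c x :=
  fun w h => ((compl_adj ..).1 h).2 (hx w)

theorem IsCenter.ne_of_isAnticenter [Nonempty W] (hx : IsCenter G c x)
    (hz : IsAnticenter G c z) : x ≠ z := by
  rintro rfl
  obtain ⟨w⟩ := ‹Nonempty W›
  exact hz w (hx w)

end Center

section Umbrella

variable {W : Type*} {H : SimpleGraph W} {G : SimpleGraph V} {c : H ↪g G} {x z v : V}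

theorem IsAnticenter.notMem_range (hz : IsAnticenter G c z) (hH : IsPrimeGraph H)
    (hs : ¬ IsSplitGraph H) : z ∉ Set.range c := by
  rintro ⟨a, rfl⟩
  obtain ⟨b, hab⟩ := hH.exists_adj hs a
  exact hz b (c.map_adj_iff.2 hab)

theorem isIndepSet_or_isCenter_of_adj_anticenter (hB : BullFree G) (hH : IsPrimeGraph H)
    (hz : IsAnticenter G c z) (hzv : G.Adj z v) :
    H.IsIndepSet (c ⁻¹' G.neighborSet v) ∨ IsCenter G c v := by
  refine or_iff_not_imp_right.2 fun hv a ha b hb hne hab => hne ?_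
  set N := c ⁻¹' G.neighborSet v
  have hK : IsHomogeneous H (componentWithin H N a) := by
    refine isHomogeneous_componentWithin_of_forall_adj ha fun m hm u hu w hw huw hmu => ?_
    by_contra hmw
    refine hB z v (c u) (c m) (c w) (IsBull.of_adj hzv hu ?_ hw ?_ (hz _) (hz _) (hz _) hm ?_)
    · exact c.map_adj_iff.2 hmu.symm
    · exact c.map_adj_iff.2 huw
    · exact c.map_adj_iff.not.2 hmw
  have hK' : componentWithin H N a ≠ Set.univ := fun h =>
    hv fun w => componentWithin_subset ha (h ▸ Set.mem_univ w)
  exact hH.subsingleton_of_isHomogeneous hK hK' mem_componentWithin_self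
    (mem_componentWithin_of_adj mem_componentWithin_self hab hb)

theorem isClique_or_isAnticenter_of_not_adj_center (hB : BullFree G) (hH : IsPrimeGraph H)
    (hx : IsCenter G c x) (hxv : ¬ G.Adj x v) :
    H.IsClique (c ⁻¹' G.neighborSet v)ᶜ ∨ IsAnticenter G c v := by
  rcases eq_or_ne x v with rfl | hne
  · exact Or.inl fun a ha => absurd (hx a) ha
  have hvc : ∀ w, v ≠ c w := by
    rintro w rfl
    exact hxv (hx w)
  have hcompl : ∀ w, Gᶜ.Adj v (c w) ↔ ¬ G.Adj v (c w) := fun w => by simp [hvc w]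
  have dichotomy := isIndepSet_or_isCenter_of_adj_anticenter (c := Embedding.complEquiv c)
    hB.compl hH.compl hx.isAnticenter_compl ((compl_adj ..).2 ⟨hne, hxv⟩)
  refine dichotomy.imp (fun indep => ?_) fun center => (isCenter_compl_iff.1 center).1
  rw [isIndepSet_compl] at indep
  exact indep.subset fun w hw => (hcompl w).2 hw

theorem adj_center_of_adj_anticenter (hB : BullFree G) (hH : IsPrimeGraph H)
    (hs : ¬ IsSplitGraph H) (hx : IsCenter G c x) (hz : IsAnticenter G c z) (hzx : G.Adj z x)
    (hv : ¬ IsCenter G c v) (hv' : ¬ IsAnticenter G c v) : G.Adj x v := by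
  by_contra hxv
  by_cases hzv : G.Adj z v
  · have indep := (isIndepSet_or_isCenter_of_adj_anticenter hB hH hz hzv).resolve_right hv
    have clique := (isClique_or_isAnticenter_of_not_adj_center hB hH hx hxv).resolve_right hv'
    exact hs ⟨_, clique, by rwa [compl_compl]⟩
  · obtain ⟨a, ha, b, hb, hab⟩ := hH.exists_adj_of_not_isSplitGraph (S := c ⁻¹' G.neighborSet v)
      hs (not_forall_not.1 hv') (not_forall.1 hv)
    exact hB z x (c a) v (c b) (IsBull.of_adj hzx (hx a) ha.symm (hx b) (c.map_adj_iff.2 hab)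
      (hz a) hzv (hz b) hxv hb)

theorem not_adj_anticenter_of_adj_center (hB : BullFree G) (hH : IsPrimeGraph H)
    (hs : ¬ IsSplitGraph H) (hx : IsCenter G c x) (hz : IsAnticenter G c z) (hzx : ¬ G.Adj z x)
    (hxv : G.Adj x v) (hv : ¬ IsCenter G c v) (hv' : ¬ IsAnticenter G c v) : ¬ G.Adj z v := by
  intro hzv
  obtain ⟨a, ha, b, hb, hab⟩ := hH.exists_not_adj_of_not_isSplitGraph (S := c ⁻¹' G.neighborSet v)
    hs (not_forall_not.1 hv') (not_forall.1 hv)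
  exact hB z v x (c b) (c a) (IsBull.of_adj hzv hxv.symm (hx b) ha (hx a) hzx (hz b) (hz a) hb
    fun h => hab (c.map_adj_iff.1 h.symm))

theorem IsCenter.adj_of_mem_componentWithin (hx : IsCenter G c x) (hB : BullFree G)
    (hH : IsPrimeGraph H) (hs : ¬ IsSplitGraph H) (hz : IsAnticenter G c z) (hzx : G.Adj z x)
    (a : W) : ∀ v ∈ componentWithin G {v | ¬ IsCenter G c v} (c a), G.Adj x v := by
  -- The last conjunct drives the induction: it forces `x` to be adjacent to the next vertex of
  -- the component when that vertex is an anticenter.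
  suffices ∀ v ∈ componentWithin G {v | ¬ IsCenter G c v} (c a), ¬ IsCenter G c v ∧ G.Adj x v ∧
      ∀ u, IsAnticenter G c u → ¬ G.Adj u x → ¬ G.Adj u v from fun v hv => (this v hv).2.1
  refine componentWithin_induction
    ⟨fun h => G.irrefl (h a), hx a, fun u hu _ => hu a⟩ fun w v ⟨hw, hxw, hwu⟩ hwv hv => ?_
  by_cases hv' : IsAnticenter G c v
  · have hxv : G.Adj x v := by_contra fun h => hwu v hv' (fun hvx => h hvx.symm) hwv.symm
    refine ⟨hv, hxv, fun u hu hux huv => ?_⟩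
    obtain ⟨b, hb⟩ : ∃ b, ¬ G.Adj w (c b) := by simpa [IsCenter] using hw
    exact hB u v x (c b) w (IsBull.of_adj huv hxv.symm (hx b) hwv.symm hxw hux (hu b)
      (hwu u hu hux) (hv' b) fun h => hb h.symm)
  · have hxv := adj_center_of_adj_anticenter hB hH hs hx hz hzx hv hv'
    exact ⟨hv, hxv, fun u hu hux =>
      not_adj_anticenter_of_adj_center hB hH hs hx hu hux hxv hv hv'⟩

theorem not_isPrimeGraph_of_forall_center_adj_anticenter (hB : BullFree G) (hH : IsPrimeGraph H)
    (hs : ¬ IsSplitGraph H) (h : ∀ x, IsCenter G c x → ∃ z, IsAnticenter G c z ∧ G.Adj z x)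
    (hx : IsCenter G c x) : ¬ IsPrimeGraph G := by
  intro hG
  obtain ⟨a⟩ := nonempty_of_not_isSplitGraph hs
  obtain ⟨b, hab⟩ := hH.exists_adj hs a
  have not_center : ∀ w, ¬ IsCenter G c (c w) := fun w hw => G.irrefl (hw w)
  set K := componentWithin G {v | ¬ IsCenter G c v} (c a)
  have hK : IsHomogeneous G K := by
    refine isHomogeneous_componentWithin fun y hy => ?_
    obtain ⟨z, hz, hzy⟩ := h y (not_not.1 hy)
    exact Or.inl ((not_not.1 hy).adj_of_mem_componentWithin hB hH hs hz hzy a)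
  have hK' : K ≠ Set.univ := fun hKu =>
    componentWithin_subset (not_center a) (hKu ▸ Set.mem_univ x : x ∈ K) hx
  have hcab : G.Adj (c a) (c b) := c.map_adj_iff.2 hab
  exact hcab.ne <| hG.subsingleton_of_isHomogeneous hK hK' mem_componentWithin_self
    (mem_componentWithin_of_adj mem_componentWithin_self hcab (not_center b))

theorem IsPrimeGraph.not_isAnticenter_of_isCenter (hG : IsPrimeGraph G) (hB : BullFree G)
    (hH : IsPrimeGraph H) (hs : ¬ IsSplitGraph H) (hx : IsCenter G c x) :
    ¬ IsAnticenter G c z := by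
  intro hz
  by_cases! h : ∀ x, IsCenter G c x → ∃ z, IsAnticenter G c z ∧ G.Adj z x
  · exact not_isPrimeGraph_of_forall_center_adj_anticenter hB hH hs h hx hG
  obtain ⟨y, hy, hyz⟩ := h
  have hz' : IsCenter Gᶜ c z := isCenter_compl_iff.2 ⟨hz, hz.notMem_range hH hs⟩
  refine not_isPrimeGraph_of_forall_center_adj_anticenter (c := Embedding.complEquiv c)
    hB.compl hH.compl (fun h => hs h.of_compl) (fun u hu => ?_) hz' hG.compl
  have hu' : IsAnticenter G c u := (isCenter_compl_iff.1 hu).1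
  have := nonempty_of_not_isSplitGraph hs
  exact ⟨y, hy.isAnticenter_compl,
    (compl_adj ..).2 ⟨hy.ne_of_isAnticenter hu', fun h => hyz u hu' h.symm⟩⟩

end Umbrella

section FiveCycle

variable {G : SimpleGraph V} {c : cycleGraph 5 ↪g G} {x z : V}

/-- An induced 5-cycle as an embedding of the abstract 5-cycle, the form in which the results on
centers and anticenters of an induced subgraph apply to it. -/
def IsInducedC5.embedding {c : Fin 5 → V} (hc : IsInducedC5 G c) : cycleGraph 5 ↪g G where
  toFun := c
  inj' := hc.1
  map_rel_iff' {i j} := by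
    change G.Adj (c i) (c j) ↔ (cycleGraph 5).Adj i j
    rw [hc.2]
    decide +revert

theorem isPrimeGraph_cycleGraph_five : IsPrimeGraph (cycleGraph 5) := by
  rintro ⟨S, hS⟩
  lift S to Finset (Fin 5) using S.toFinite
  simp only [IsProperHomogeneous, IsHomogeneous, Finset.mem_coe, ← Finset.coe_univ,
    ne_eq, Finset.coe_inj] at hS
  revert S
  decide

theorem not_isSplitGraph_cycleGraph_five : ¬ IsSplitGraph (cycleGraph 5) := by
  rintro ⟨K, hK⟩
  lift K to Finset (Fin 5) using K.toFinite
  rw [← Finset.coe_compl] at hK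
  revert K
  decide

theorem card_le_two_of_isIndepSet_cycleGraph_five {N : Finset (Fin 5)}
    (hN : (cycleGraph 5).IsIndepSet N) : N.card ≤ 2 := by
  revert N
  decide

theorem P6Free.not_forall_adj_iff_succ_eq (hP : P6Free G) (p : Fin 6 → V) :
    ¬ ∀ i j, i < j → (G.Adj (p i) (p j) ↔ i.val + 1 = j.val) := by
  intro h
  have adj_iff : ∀ i j, G.Adj (p i) (p j) ↔ (i.val + 1 = j.val ∨ j.val + 1 = i.val) := by
    intro i j
    rcases lt_trichotomy i j with hij | rfl | hij
    · rw [h i j hij]; omega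
    · simp
    · rw [G.adj_comm, h j i hij]; omega
  refine hP ⟨p, fun i j hij => ?_, adj_iff⟩
  have same_nbrs : ∀ k : Fin 6, (i.val + 1 = k.val ∨ k.val + 1 = i.val) ↔
      (j.val + 1 = k.val ∨ k.val + 1 = j.val) := fun k => by rw [← adj_iff, ← adj_iff, hij]
  clear hij adj_iff h
  decide +revert

theorem P6Free.not_forall_adj_iff_eq (hP : P6Free G) (hz : IsAnticenter G c z) (hzx : G.Adj z x)
    (i : Fin 5) : ¬ ∀ j, G.Adj x (c j) ↔ j = i := by
  intro hx
  have hz' : ∀ w, ¬ G.Adj z (c w) := hz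
  have neg_two_ne_one : (-2 : Fin 5) ≠ 1 := by decide
  have neg_three_ne_one : (-3 : Fin 5) ≠ 1 := by decide
  refine hP.not_forall_adj_iff_succ_eq ![z, x, c i, c (i + 1), c (i + 2), c (i + 3)]
    fun a b hab => ?_
  fin_cases a <;> fin_cases b <;>
    first
    | (exact absurd hab (by decide))
    | simp [hz', hzx, hx, cycleGraph_adj, neg_two_ne_one, neg_three_ne_one]

end FiveCycle

theorem stmt6 (G : SimpleGraph V) [DecidableRel G.Adj]
    (hP : P6Free G) (hB : BullFree G) (hPr : IsPrimeGraph G)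
    (c : Fin 5 → V) (hc : IsInducedC5 G c)
    (z : V) (hz : z ∉ Set.range c) (hz0 : ∀ i : Fin 5, ¬ G.Adj z (c i))
    (x : V) (hx : x ∉ Set.range c) (hzx : G.Adj z x)
    (hk1 : 1 ≤ nbrCount G c x) :
    nbrCount G c x = 2 := by
  set c' := hc.embedding
  have hz' : IsAnticenter G c' z := hz0
  set N : Finset (Fin 5) := {i | G.Adj x (c i)} with hN
  have indep : (cycleGraph 5).IsIndepSet N := by
    rcases isIndepSet_or_isCenter_of_adj_anticenter hB isPrimeGraph_cycleGraph_five hz' hzx with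
      indep | center
    · rw [hN, Finset.coe_filter_univ]
      exact indep
    · exact absurd hz' (hPr.not_isAnticenter_of_isCenter hB isPrimeGraph_cycleGraph_five
        not_isSplitGraph_cycleGraph_five center)
  have card_ne_one : N.card ≠ 1 := fun h => by
    obtain ⟨i, hi⟩ := Finset.card_eq_one.1 h
    have adj_iff_eq : ∀ j, G.Adj x (c j) ↔ j = i := by simpa [hN, Finset.ext_iff] using hi
    exact hP.not_forall_adj_iff_eq hz' hzx i adj_iff_eq
  have card_le_two : N.card ≤ 2 := card_le_two_of_isIndepSet_cycleGraph_five indep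
  have one_le_card : 1 ≤ N.card := hk1
  change N.card = 2
  omega
end

section
/- Let G be a prime (P6, bull)-free graph containing an induced G7 (an induced 5-cycle C on c1,...,c5 with edges c_i c_{i+1} mod 5, plus d adjacent exactly to c1, c4, x, and x adjacent only to d). Let F be the set of vertices outside C with exactly four neighbors on C. Then the induced subgraph G \ F is triangle-free. -/
open SimpleGraph

variable {V : Type*}

/-!
For `v` in `V` let `N(v)` be its set of neighbours in the induced G7. Excluding bulls and paths that
consist of `v` and vertices of the G7 leaves few possibilities for `N(v)`: eighteen independent
sets, `{0, 1, 2, 3}`, the whole G7, and the closed neighbourhoods in the G7. The engine for the rest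
is a form of primality: if `P` is not all of `V`, and every vertex that distinguishes two adjacent
vertices of `P` lies in `P`, then `P` is independent.

Applied to the vertices that are not complete to the G7 but adjacent to all the complete ones, it
shows that no vertex is complete to the G7; applied to the clones of a vertex `p` of the G7, it
excludes the closed neighbourhood of `p`; applied to the vertices with a given independent `N(v)`,
it shows that these are pairwise nonadjacent. The vertices with `N(v) = {0, 1, 2, 3}` belong to `F`,
so on a triangle outside `F` all the sets `N(v)` are independent. They are then disjoint, hence
pairwise complete to each other as there is no bull, and nonempty; so they yield a triangle in the
G7, which has none.
-/

/-- The vertices `a b c d` induce a four-vertex path in `G` (edges ab, bc, cd). -/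
def IsP4 (G : SimpleGraph V) (a b c d : V) : Prop :=
  G.Adj a b ∧ ¬ G.Adj a c ∧ ¬ G.Adj a d ∧ G.Adj b c ∧ ¬ G.Adj b d ∧ G.Adj c d

instance (G : SimpleGraph V) [DecidableRel G.Adj] (a b c d : V) : Decidable (IsP4 G a b c d) :=
  inferInstanceAs (Decidable (_ ∧ _))

theorem BullFree.adj_of_triangle {G : SimpleGraph V} (hB : BullFree G) {a b c d e : V}
    (hbc : G.Adj b c) (hbe : G.Adj b e) (hce : G.Adj c e)
    (hab : G.Adj a b) (hac : ¬ G.Adj a c) (hae : ¬ G.Adj a e)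
    (hdc : G.Adj d c) (hdb : ¬ G.Adj d b) (hde : ¬ G.Adj d e) : G.Adj a d := by
  by_contra had
  exact hB a b c d e ⟨hab.ne, (G.ne_of_adj_of_not_adj hce hae).symm, G.ne_of_adj_of_not_adj hab hdb,
    (G.ne_of_adj_of_not_adj hce.symm hac).symm, hbc.ne, G.ne_of_adj_of_not_adj hbe hde, hbe.ne,
    hdc.ne', hce.ne, (G.ne_of_adj_of_not_adj hbe.symm hdb).symm,
    hab, hbc, hdc.symm, hbe, hce, hac, had, hae, mt G.adj_symm hdb, hde⟩

theorem P6Free.not_isP4_of_tail {G : SimpleGraph V} (hP : P6Free G) {a b c d e f : V}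
    (hab : G.Adj a b) (hbc : G.Adj b c) (hac : ¬ G.Adj a c) (had : ¬ G.Adj a d)
    (hae : ¬ G.Adj a e) (haf : ¬ G.Adj a f) (hbd : ¬ G.Adj b d) (hbe : ¬ G.Adj b e)
    (hbf : ¬ G.Adj b f) : ¬ IsP4 G c d e f := by
  rintro ⟨hcd, hce, hcf, hde, hdf, hef⟩
  have hadj : ∀ i j : Fin 6, G.Adj (![a, b, c, d, e, f] i) (![a, b, c, d, e, f] j) ↔
      (i.val + 1 = j.val ∨ j.val + 1 = i.val) := by
    intro i j
    fin_cases i <;> fin_cases j <;> simp_all [G.adj_comm]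
  have htwin : ∀ i j : Fin 6, (∀ k : Fin 6, (i.val + 1 = k.val ∨ k.val + 1 = i.val) ↔
      (j.val + 1 = k.val ∨ k.val + 1 = j.val)) → i = j := by decide
  exact hP ⟨![a, b, c, d, e, f],
    fun i j hij => htwin i j fun k => by rw [← hadj, ← hadj, hij], hadj⟩

theorem IsPrimeGraph.mem_of_isHomogeneous {G : SimpleGraph V} (hPr : IsPrimeGraph G) {S : Set V}
    (hS : IsHomogeneous G S) {a b : V} (ha : a ∈ S) (hb : b ∈ S) (hab : a ≠ b) (w : V) :
    w ∈ S := by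
  by_contra hw
  exact hPr ⟨S, hS, ⟨a, ha, b, hb, hab⟩, fun h => hw (h ▸ Set.mem_univ w)⟩

-- Otherwise the component of `u` in the subgraph induced on `P` is homogeneous.
theorem IsPrimeGraph.not_adj_of_closed {G : SimpleGraph V} (hPr : IsPrimeGraph G) {P : Set V}
    (hclosed : ∀ u ∈ P, ∀ v ∈ P, G.Adj u v → ∀ z, G.Adj z u → ¬ G.Adj z v → z ∈ P)
    {w : V} (hw : w ∉ P) {u v : V} (hu : u ∈ P) (hv : v ∈ P) : ¬ G.Adj u v := by
  intro huv
  let S : Set V := {y | Relation.ReflTransGen (fun a b => G.Adj a b ∧ b ∈ P) u y}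
  have hSP : S ⊆ P := fun y hy => by
    rcases Relation.ReflTransGen.cases_tail hy with rfl | ⟨_, _, _, hyP⟩
    exacts [hu, hyP]
  have hadj_iff {z : V} (hz : z ∉ S) {y : V} (hy : y ∈ S) : G.Adj z y ↔ G.Adj z u := by
    have hzP {y : V} (hy : y ∈ S) (hzy : G.Adj z y) : z ∉ P := fun h =>
      hz (Relation.ReflTransGen.tail hy ⟨hzy.symm, h⟩)
    induction hy with
    | refl => rfl
    | @tail y y' hy hyy' ih =>
      have hy' : y' ∈ S := Relation.ReflTransGen.tail hy hyy'
      refine Iff.trans ⟨fun h => ?_, fun h => ?_⟩ ih <;> by_contra hn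
      · exact hzP hy' h (hclosed y' (hSP hy') y (hSP hy) hyy'.1.symm z h hn)
      · exact hzP hy h (hclosed y (hSP hy) y' (hSP hy') hyy'.1 z h hn)
  have hS : IsHomogeneous G S := fun z hz => by
    by_cases hzu : G.Adj z u
    · exact Or.inl fun y hy => (hadj_iff hz hy).mpr hzu
    · exact Or.inr fun y hy => mt (hadj_iff hz hy).mp hzu
  exact hw (hSP (hPr.mem_of_isHomogeneous hS .refl (.single ⟨huv, hv⟩) huv.ne w))

/-- `w` is a clone of the vertex `f p` of the family `f`: outside of `f p` itself, both have the
same neighbours in the family. Whether `w` and `f p` are adjacent is left open. -/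
def IsClone {W : Type*} (G : SimpleGraph V) (f : W → V) (p : W) (w : V) : Prop :=
  ∀ i ≠ p, G.Adj w (f i) ↔ G.Adj (f p) (f i)

theorem IsClone.comap_update {W : Type*} [DecidableEq W] {G : SimpleGraph V} {f : W → V}
    {p : W} {u : V} (hu : IsClone G f p u) : G.comap (Function.update f p u) = G.comap f := by
  ext i j
  rw [comap_adj, comap_adj]
  by_cases hi : i = p <;> by_cases hj : j = p
  · simp [hi, hj]
  · simpa [hi, hj] using hu j hj
  · simpa [hi, hj, G.adj_comm] using hu i hi
  · simp [hi, hj]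

section Traces

variable {W : Type*} [Fintype W]

/-- The trace of a vertex `v` on a family `f` of vertices: the set of indices of the neighbours
of `v`. -/
def nbrTrace (G : SimpleGraph V) [DecidableRel G.Adj] (f : W → V) (v : V) : Finset W :=
  {i | G.Adj v (f i)}

theorem mem_nbrTrace {G : SimpleGraph V} [DecidableRel G.Adj] {f : W → V} {v : V} {i : W} :
    i ∈ nbrTrace G f v ↔ G.Adj v (f i) := by
  simp [nbrTrace]

theorem BullFree.adj_of_mem_nbrTrace {G : SimpleGraph V} [DecidableRel G.Adj]
    (hB : BullFree G) {f : W → V} {a b e : V}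
    (hab : G.Adj a b) (hae : G.Adj a e) (hbe : G.Adj b e)
    (hdab : Disjoint (nbrTrace G f a) (nbrTrace G f b))
    (hdae : Disjoint (nbrTrace G f a) (nbrTrace G f e))
    (hdbe : Disjoint (nbrTrace G f b) (nbrTrace G f e))
    {i j : W} (hi : i ∈ nbrTrace G f a) (hj : j ∈ nbrTrace G f b) : G.Adj (f i) (f j) := by
  have not_adj {s t : V} {k : W} (hst : Disjoint (nbrTrace G f s) (nbrTrace G f t))
      (hk : k ∈ nbrTrace G f s) : ¬ G.Adj (f k) t := fun h =>
    Finset.disjoint_left.mp hst hk (mem_nbrTrace.mpr h.symm)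
  exact hB.adj_of_triangle hab hae hbe (mem_nbrTrace.mp hi).symm (not_adj hdab hi)
    (not_adj hdae hi) (mem_nbrTrace.mp hj).symm (not_adj hdab.symm hj) (not_adj hdbe hj)

variable [DecidableEq W]

/-- `t` may be the trace on `H` of a vertex `v` of a bull-free graph. Of the bulls made of `v` and
vertices of `H`, this excludes only those in which `v` lies on the triangle. -/
def BullFreeTrace (H : SimpleGraph W) (t : Finset W) : Prop :=
  (∀ b ∈ t, ∀ c ∈ t, H.Adj b c → ∀ a ∈ tᶜ, H.Adj a b → ¬ H.Adj a c →
    ∀ d ∈ tᶜ, H.Adj d c → ¬ H.Adj d b → H.Adj a d) ∧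
  (∀ c ∈ t, ∀ e ∈ t, H.Adj c e → ∀ a ∈ t, ¬ H.Adj a c → ¬ H.Adj a e →
    ∀ d ∈ tᶜ, H.Adj d c → ¬ H.Adj d e → H.Adj a d)

/-- `t` may be the trace on `H` of a vertex `v` of a P6-free graph. Of the induced six-vertex paths
made of `v` and vertices of `H`, this excludes only those whose first or second vertex is `v`. -/
def P6FreeTrace (H : SimpleGraph W) (t : Finset W) : Prop :=
  (∀ b ∈ t, ∀ c ∈ tᶜ, ∀ d ∈ tᶜ, ∀ e ∈ tᶜ, IsP4 H b c d e →
    ∀ f ∈ tᶜ, IsP4 H c d e f → H.Adj b f) ∧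
  (∀ c ∈ t, ∀ d ∈ tᶜ, ∀ e ∈ tᶜ, ∀ f ∈ tᶜ, IsP4 H c d e f →
    ∀ a ∈ t, H.Adj a c ∨ H.Adj a d ∨ H.Adj a e ∨ H.Adj a f)

/-- `s` and `t` may be the traces on `H` of adjacent vertices `u` and `v` of a (P6, bull)-free
graph. Of the bulls and six-vertex paths made of `u`, `v` and vertices of `H`, this excludes only
the bulls with triangle `u v c` and pendant vertices at `v` and `c`, and the paths that start with
`u v`. -/
def AdjTraces (H : SimpleGraph W) (s t : Finset W) : Prop :=
  (∀ c ∈ s ∩ t, ∀ a ∈ t \ s, ¬ H.Adj a c → ∀ d ∈ (s ∪ t)ᶜ, H.Adj d c → H.Adj a d) ∧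
  (∀ c ∈ t \ s, ∀ d ∈ (s ∪ t)ᶜ, ∀ e ∈ (s ∪ t)ᶜ, ∀ f ∈ (s ∪ t)ᶜ, ¬ IsP4 H c d e f)

/-- `s` and `t` may be the traces on `H` of nonadjacent vertices `w` and `z` of a (P6, bull)-free
graph. Of the bulls and six-vertex paths made of `w`, `z` and vertices of `H`, this excludes only
some bulls in which one of `w` and `z` is pendant and the other lies on the triangle, and the paths
whose first and third vertices are `w` and `z`. -/
def NonadjTraces (H : SimpleGraph W) (s t : Finset W) : Prop :=
  (∀ b ∈ s ∩ t, ∀ e ∈ t \ s, H.Adj b e → ∀ d ∈ t \ s, H.Adj d b ∨ H.Adj d e) ∧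
  (∀ b ∈ s ∩ t, ∀ c ∈ s \ t, H.Adj b c → ∀ d ∈ (s ∪ t)ᶜ, H.Adj d c → H.Adj d b) ∧
  (∀ b ∈ s ∩ t, ∀ d ∈ t \ s, ¬ H.Adj b d → ∀ e ∈ (s ∪ t)ᶜ, H.Adj d e → ¬ H.Adj b e →
    ∀ f ∈ (s ∪ t)ᶜ, H.Adj e f → H.Adj b f ∨ H.Adj d f)

/-- In a (P6, bull)-free graph, `s` may be the common trace on `H` of adjacent vertices `u` and `v`,
and `t` the trace of a vertex `z` adjacent to `u` but not to `v`. Of the bulls and six-vertex paths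
made of `u`, `v`, `z` and vertices of `H`, this excludes only the bulls with triangle `u v p` and
pendant vertex `z`, and the paths that start with `v u z`. -/
def SplitTraces (H : SimpleGraph W) (s t : Finset W) : Prop :=
  (∀ p ∈ s \ t, ∀ q ∈ (s ∪ t)ᶜ, ¬ H.Adj q p) ∧
  (∀ p ∈ t \ s, ∀ q ∈ (s ∪ t)ᶜ, H.Adj p q → ∀ r ∈ (s ∪ t)ᶜ, H.Adj q r → H.Adj p r)

-- The instance found by default runs through all of `W`, which makes kernel evaluation slow.
instance (s : Finset W) (p : W → Prop) [DecidablePred p] : Decidable (∀ i ∈ s, p i) :=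
  Finset.decidableDforallFinset

set_option synthInstance.maxSize 1000 in
instance (H : SimpleGraph W) [DecidableRel H.Adj] : DecidablePred (BullFreeTrace H) :=
  fun _ => inferInstanceAs (Decidable (_ ∧ _))

instance (H : SimpleGraph W) [DecidableRel H.Adj] : DecidablePred (P6FreeTrace H) :=
  fun _ => inferInstanceAs (Decidable (_ ∧ _))

instance (H : SimpleGraph W) [DecidableRel H.Adj] : DecidableRel (AdjTraces H) :=
  fun _ _ => inferInstanceAs (Decidable (_ ∧ _))

instance (H : SimpleGraph W) [DecidableRel H.Adj] : DecidableRel (NonadjTraces H) :=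
  fun _ _ => inferInstanceAs (Decidable (_ ∧ _))

instance (H : SimpleGraph W) [DecidableRel H.Adj] : DecidableRel (SplitTraces H) :=
  fun _ _ => inferInstanceAs (Decidable (_ ∧ _))

variable {G : SimpleGraph V} [DecidableRel G.Adj]

theorem BullFree.bullFreeTrace (hB : BullFree G) (f : W → V) (v : V) :
    BullFreeTrace (G.comap f) (nbrTrace G f v) := by
  simp only [BullFreeTrace, Finset.mem_compl, mem_nbrTrace, comap_adj]
  refine ⟨fun b hb c hc hbc a ha hab hac d hd hdc hdb => ?_,
    fun c hc e he hce a ha hac hae d hd hdc hde => ?_⟩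
  · exact hB.adj_of_triangle hbc hb.symm hc.symm hab hac (mt G.adj_symm ha) hdc hdb
      (mt G.adj_symm hd)
  · exact hB.adj_of_triangle hc he hce ha.symm hac hae hdc (mt G.adj_symm hd) hde

theorem P6Free.p6FreeTrace (hP : P6Free G) (f : W → V) (v : V) :
    P6FreeTrace (G.comap f) (nbrTrace G f v) := by
  simp only [P6FreeTrace, Finset.mem_compl, mem_nbrTrace]
  refine ⟨fun b hb c hc d hd e he hbcde g hg hcdeg => ?_,
    fun c hc d hd e he g hg hcdeg a ha => ?_⟩
  · by_contra hbg
    obtain ⟨hbc, hbd, hbe, -⟩ := hbcde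
    exact hP.not_isP4_of_tail hb hbc hc hd he hg hbd hbe hbg hcdeg
  · by_contra! ⟨hac, had, hae, hag⟩
    exact hP.not_isP4_of_tail ha.symm hc hac had hae hag hd he hg hcdeg

theorem adjTraces_of_adj (hP : P6Free G) (hB : BullFree G) (f : W → V) {u v : V}
    (huv : G.Adj u v) : AdjTraces (G.comap f) (nbrTrace G f u) (nbrTrace G f v) := by
  simp only [AdjTraces, Finset.mem_inter, Finset.mem_sdiff, Finset.mem_compl, Finset.mem_union,
    not_or, mem_nbrTrace, comap_adj]
  refine ⟨fun c ⟨huc, hvc⟩ a ⟨hva, hua⟩ hac d ⟨hud, hvd⟩ hdc => ?_,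
    fun c ⟨hvc, huc⟩ d ⟨hud, hvd⟩ e ⟨hue, hve⟩ g ⟨hug, hvg⟩ => ?_⟩
  · exact hB.adj_of_triangle hvc huv.symm huc.symm hva.symm hac (mt G.adj_symm hua) hdc
      (mt G.adj_symm hvd) (mt G.adj_symm hud)
  · exact hP.not_isP4_of_tail huv hvc huc hud hue hug hvd hve hvg

theorem nonadjTraces_of_not_adj (hP : P6Free G) (hB : BullFree G) (f : W → V) {w z : V}
    (hwz : ¬ G.Adj w z) : NonadjTraces (G.comap f) (nbrTrace G f w) (nbrTrace G f z) := by
  simp only [NonadjTraces, Finset.mem_inter, Finset.mem_sdiff, Finset.mem_compl, Finset.mem_union,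
    not_or, mem_nbrTrace, comap_adj]
  refine ⟨fun b ⟨hwb, hzb⟩ e ⟨hze, hwe⟩ hbe d ⟨hzd, hwd⟩ => ?_,
    fun b ⟨hwb, hzb⟩ c ⟨hwc, hzc⟩ hbc d ⟨hwd, hzd⟩ hdc => ?_,
    fun b ⟨hwb, hzb⟩ d ⟨hzd, hwd⟩ hbd e ⟨hwe, hze⟩ hde hbe g ⟨hwg, hzg⟩ heg => ?_⟩
  · by_contra! ⟨hdb, hde⟩
    exact hwd (hB.adj_of_triangle hzb.symm hbe hze hwb hwz hwe hzd.symm hdb hde)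
  · by_contra hdb
    exact hzd (hB.adj_of_triangle hbc hwb.symm hwc.symm hzb hzc (mt G.adj_symm hwz) hdc hdb
      (mt G.adj_symm hwd))
  · by_contra! ⟨hbg, hdg⟩
    exact hP.not_isP4_of_tail hwb hzb.symm hwz hwd hwe hwg hbd hbe hbg
      ⟨hzd, hze, hzg, hde, hdg, heg⟩

theorem splitTraces_of_adj (hP : P6Free G) (hB : BullFree G) (f : W → V) {u v z : V}
    (huv : G.Adj u v) (htrace : nbrTrace G f u = nbrTrace G f v) (hzu : G.Adj z u)
    (hzv : ¬ G.Adj z v) : SplitTraces (G.comap f) (nbrTrace G f u) (nbrTrace G f z) := by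
  have hu_iff (i : W) : G.Adj u (f i) ↔ G.Adj v (f i) := by
    rw [← mem_nbrTrace, htrace, mem_nbrTrace]
  simp only [SplitTraces, Finset.mem_sdiff, Finset.mem_compl, Finset.mem_union, not_or,
    mem_nbrTrace, comap_adj]
  refine ⟨fun p ⟨hup, hzp⟩ q ⟨huq, hzq⟩ hqp => ?_,
    fun p ⟨hzp, hup⟩ q ⟨huq, hzq⟩ hpq r ⟨hur, hzr⟩ hqr => ?_⟩
  · have hvp := (hu_iff p).mp hup
    have hvq := mt (hu_iff q).mpr huq
    exact hzq (hB.adj_of_triangle hup huv hvp.symm hzu hzp hzv hqp (mt G.adj_symm huq)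
      (mt G.adj_symm hvq))
  · by_contra hpr
    exact hP.not_isP4_of_tail huv.symm hzu.symm (mt G.adj_symm hzv) (mt (hu_iff p).mpr hup)
      (mt (hu_iff q).mpr huq) (mt (hu_iff r).mpr hur) hup huq hur ⟨hzp, hzq, hzr, hpq, hpr, hqr⟩

theorem nbrTrace_update_eq_insert_iff {f : W → V} {p : W} {u w : V} :
    nbrTrace G (Function.update f p u) w = insert p (nbrTrace G f (f p)) ↔
      G.Adj w u ∧ IsClone G f p w := by
  simp only [Finset.ext_iff, mem_nbrTrace, Finset.mem_insert]
  refine ⟨fun h => ⟨by simpa using h p, fun i hi => by simpa [hi] using h i⟩,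
    fun ⟨hwu, hw⟩ i => ?_⟩
  by_cases hi : i = p
  · simpa [hi] using hwu
  · simpa [hi] using hw i hi

end Traces

section G7

/-- The neighbourhoods in `g7`. -/
def g7Nbrs : Fin 7 → Finset (Fin 7) :=
  ![{1, 4, 5}, {0, 2}, {1, 3}, {2, 4, 5}, {0, 3}, {0, 3, 6}, {5}]

/-- The graph G7: the vertices `0, …, 4` form the 5-cycle, `5` is `d`, and `6` is `x`. -/
def g7 : SimpleGraph (Fin 7) where
  Adj i j := j ∈ g7Nbrs i
  symm := ⟨by decide⟩
  loopless := ⟨by decide⟩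

instance : DecidableRel g7.Adj := fun i j => inferInstanceAs (Decidable (j ∈ g7Nbrs i))

/-- The independent sets of `g7` that may be traces of vertices of a (P6, bull)-free graph, found by
enumeration. -/
def g7IndepTraces : Finset (Finset (Fin 7)) :=
  {∅, {0}, {3}, {4}, {5}, {0, 2}, {0, 3}, {1, 3}, {1, 5}, {2, 5}, {4, 5}, {1, 4, 5}, {2, 4, 5},
    {0, 2, 6}, {0, 3, 6}, {1, 3, 6}, {1, 4, 6}, {2, 4, 6}}

/-- The possible traces on `g7` of a vertex of a (P6, bull)-free graph: the independent ones, the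
trace `{0, 1, 2, 3}` of the vertices with four neighbours on the 5-cycle, the full trace, and the
closed neighbourhoods of the vertices of `g7`. -/
def IsG7Trace (t : Finset (Fin 7)) : Prop :=
  t ∈ g7IndepTraces ∨ t = {0, 1, 2, 3} ∨ t = Finset.univ ∨ ∃ p, t = insert p (g7Nbrs p)

instance : DecidablePred IsG7Trace := fun _ => inferInstanceAs (Decidable (_ ∨ _))

theorem isG7Trace_of_bullFreeTrace_of_p6FreeTrace {t : Finset (Fin 7)} (hB : BullFreeTrace g7 t)
    (hP : P6FreeTrace g7 t) : IsG7Trace t := by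
  have hcases : ∀ t, ¬ IsG7Trace t → BullFreeTrace g7 t → ¬ P6FreeTrace g7 t := by decide +kernel
  exact by_contra fun ht => hcases t ht hB hP

theorem IsG7Trace.exists_adj_notMem {t : Finset (Fin 7)} (ht : IsG7Trace t) (hne : t ≠ ∅)
    (huniv : t ≠ Finset.univ) :
    ∃ p ∈ t, ∃ q ∉ t, g7.Adj p q ∧ ∃ r ∉ t, ¬ g7.Adj r p ∧ ¬ g7.Adj r q := by
  revert t
  decide +kernel

theorem IsG7Trace.eq_insert_of_nonadjTraces {p : Fin 7} {t : Finset (Fin 7)} (ht : IsG7Trace t)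
    (hp : p ∈ t) (hnonadj : NonadjTraces g7 (insert p (g7Nbrs p)) t) :
    t = insert p (g7Nbrs p) := by
  have hcases : ∀ p t, p ∈ t → IsG7Trace t → t ≠ insert p (g7Nbrs p) →
      ¬ NonadjTraces g7 (insert p (g7Nbrs p)) t := by decide +kernel
  exact by_contra fun hne => hcases p t hp ht hne hnonadj

theorem disjoint_of_adjTraces {s t : Finset (Fin 7)} (hs : s ∈ g7IndepTraces)
    (ht : t ∈ g7IndepTraces) (hne : s ≠ t) (hst : AdjTraces g7 s t) (hts : AdjTraces g7 t s) :
    Disjoint s t := by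
  have hcases : ∀ s ∈ g7IndepTraces, ∀ t ∈ g7IndepTraces, s ≠ t → ¬ Disjoint s t →
      AdjTraces g7 s t → ¬ AdjTraces g7 t s := by decide +kernel
  exact by_contra fun hdisj => hcases s hs t ht hne hdisj hst hts

theorem eq_of_splitTraces_of_adjTraces {s t : Finset (Fin 7)} (hs : s ∈ g7IndepTraces)
    (ht : t ∈ g7IndepTraces ∨ t = {0, 1, 2, 3}) (hsplit : SplitTraces g7 s t)
    (hadj : AdjTraces g7 s t) : t = s := by
  have hcases : ∀ s ∈ g7IndepTraces, ∀ t ∈ insert {0, 1, 2, 3} g7IndepTraces, t ≠ s →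
      SplitTraces g7 s t → ¬ AdjTraces g7 s t := by decide +kernel
  exact by_contra fun hne => hcases s hs t (Finset.mem_insert.mpr ht.symm) hne hsplit hadj

set_option synthInstance.maxSize 1000 in
theorem not_adjTraces_empty_of_complete {s t : Finset (Fin 7)} (hs : s ∈ g7IndepTraces)
    (ht : t ∈ g7IndepTraces) (hs_ne : s ≠ ∅) (ht_ne : t ≠ ∅)
    (hcomplete : ∀ i ∈ s, ∀ j ∈ t, g7.Adj i j) (hadj : AdjTraces g7 ∅ s) :
    ¬ AdjTraces g7 ∅ t := by
  have hcases : ∀ s ∈ g7IndepTraces, s ≠ ∅ → AdjTraces g7 ∅ s → ∀ t ∈ g7IndepTraces, t ≠ ∅ →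
      (∀ i ∈ s, ∀ j ∈ t, g7.Adj i j) → ¬ AdjTraces g7 ∅ t := by decide +kernel
  exact hcases s hs hs_ne hadj t ht ht_ne hcomplete

theorem g7_cliqueFree : g7.CliqueFree 3 := by
  intro s hs
  obtain ⟨i, j, k, hij, hik, hjk, -⟩ := is3Clique_iff.mp hs
  revert i j k
  decide

theorem g7_exists_not_adj_iff (p : Fin 7) :
    ∃ j, ∃ i ≠ p, ¬ (g7.Adj j i ↔ g7.Adj p i) := by
  decide +revert

end G7

section InducedG7

variable {G : SimpleGraph V} [DecidableRel G.Adj] {f : Fin 7 → V}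

theorem nbrTrace_apply (hf : G.comap f = g7) (p : Fin 7) : nbrTrace G f (f p) = g7Nbrs p := by
  ext i
  rw [mem_nbrTrace, ← comap_adj, hf]
  rfl

theorem isG7Trace_nbrTrace (hP : P6Free G) (hB : BullFree G) (hf : G.comap f = g7) (v : V) :
    IsG7Trace (nbrTrace G f v) :=
  isG7Trace_of_bullFreeTrace_of_p6FreeTrace (hf ▸ hB.bullFreeTrace f v) (hf ▸ hP.p6FreeTrace f v)

theorem exists_adj_not_adj_of_nbrTrace (hP : P6Free G) (hB : BullFree G) (hf : G.comap f = g7)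
    {v : V} (hv : nbrTrace G f v ≠ ∅) (hv' : nbrTrace G f v ≠ Finset.univ) :
    ∃ p q r, G.Adj v (f p) ∧ ¬ G.Adj v (f q) ∧ ¬ G.Adj v (f r) ∧
      G.Adj (f p) (f q) ∧ ¬ G.Adj (f r) (f p) ∧ ¬ G.Adj (f r) (f q) := by
  obtain ⟨p, hp, q, hq, hpq, r, hr, hrp, hrq⟩ :=
    (isG7Trace_nbrTrace hP hB hf v).exists_adj_notMem hv hv'
  rw [mem_nbrTrace] at hp hq hr
  rw [← hf] at hpq hrp hrq
  exact ⟨p, q, r, hp, hq, hr, hpq, hrp, hrq⟩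

theorem adj_of_complete_of_nbrTrace_ne (hP : P6Free G) (hB : BullFree G) (hf : G.comap f = g7)
    {a v : V} (ha : ∀ i, G.Adj a (f i)) (hv : nbrTrace G f v ≠ ∅)
    (hv' : nbrTrace G f v ≠ Finset.univ) : G.Adj v a := by
  by_contra hva
  obtain ⟨p, q, r, hp, hq, hr, hpq, hrp, hrq⟩ := exists_adj_not_adj_of_nbrTrace hP hB hf hv hv'
  exact hr (hB.adj_of_triangle (ha p).symm hpq (ha q) hp hva hq (ha r).symm hrp hrq)

theorem adj_of_complete_of_adj_of_not_adj (hP : P6Free G) (hB : BullFree G) (hf : G.comap f = g7)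
    {a y y' z : V} (ha : ∀ i, G.Adj a (f i)) (hya : G.Adj y a) (hy'a : G.Adj y' a)
    (hyy' : G.Adj y y') (hy : nbrTrace G f y ≠ Finset.univ) (hy' : nbrTrace G f y' ≠ Finset.univ)
    (hz : nbrTrace G f z ≠ Finset.univ) (hzy : G.Adj z y) (hzy' : ¬ G.Adj z y') : G.Adj z a := by
  by_contra hza
  have hzf (i : Fin 7) : ¬ G.Adj z (f i) := by
    have hempty : nbrTrace G f z = ∅ :=
      by_contra fun hne => hza (adj_of_complete_of_nbrTrace_ne hP hB hf ha hne hz)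
    rw [← mem_nbrTrace, hempty]
    exact Finset.notMem_empty i
  by_cases hyf : nbrTrace G f y = ∅
  · obtain ⟨q, hq⟩ : ∃ q, ¬ G.Adj y' (f q) := by
      simpa [Finset.ext_iff, mem_nbrTrace] using hy'
    have hqy : ¬ G.Adj y (f q) := by
      rw [← mem_nbrTrace, hyf]
      exact Finset.notMem_empty q
    exact hzf q (hB.adj_of_triangle hya hyy' hy'a.symm hzy hza hzy' (ha q).symm
      (mt G.adj_symm hqy) (mt G.adj_symm hq))
  · obtain ⟨p, -, r, hp, -, hr, -, hrp, -⟩ := exists_adj_not_adj_of_nbrTrace hP hB hf hyf hy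
    exact hzf r (hB.adj_of_triangle hya hp (ha p) hzy hza (hzf p) (ha r).symm
      (mt G.adj_symm hr) hrp)

theorem nbrTrace_ne_univ (hP : P6Free G) (hB : BullFree G) (hPr : IsPrimeGraph G)
    (hf : G.comap f = g7) (a : V) : nbrTrace G f a ≠ Finset.univ := by
  intro ha
  have hfull {b : V} (hb : nbrTrace G f b = Finset.univ) (i : Fin 7) : G.Adj b (f i) :=
    mem_nbrTrace.mp (hb ▸ Finset.mem_univ i)
  let P : Set V := {y | nbrTrace G f y ≠ Finset.univ ∧
    ∀ b, nbrTrace G f b = Finset.univ → G.Adj y b}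
  have hmem (i : Fin 7) : f i ∈ P := by
    refine ⟨?_, fun b hb => (hfull hb i).symm⟩
    rw [nbrTrace_apply hf]
    decide +revert
  refine hPr.not_adj_of_closed (P := P) ?_ (w := a) (fun h => h.1 ha) (hmem 0) (hmem 1)
    (mem_nbrTrace.mp (by rw [nbrTrace_apply hf]; decide))
  intro y ⟨hy, hyfull⟩ y' ⟨hy', hy'full⟩ hyy' z hzy hzy'
  have hz : nbrTrace G f z ≠ Finset.univ := fun h => hzy' (hy'full z h).symm
  exact ⟨hz, fun b hb => adj_of_complete_of_adj_of_not_adj hP hB hf (hfull hb) (hyfull b hb)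
    (hy'full b hb) hyy' hy hy' hz hzy hzy'⟩

-- Substituting the clone `u` for `f p` gives another induced G7, on which the trace of `w` is the
-- closed neighbourhood of `p`.
theorem IsClone.of_adj {G : SimpleGraph V} {f : Fin 7 → V} (hP : P6Free G) (hB : BullFree G)
    (hf : G.comap f = g7) {p : Fin 7} {u w z : V} (hu : IsClone G f p u)
    (hw : IsClone G f p w) (huw : G.Adj u w) (hzu : G.Adj z u) (hzw : ¬ G.Adj z w) :
    IsClone G f p z := by
  classical
  have hf' : G.comap (Function.update f p u) = g7 := hu.comap_update.trans hf
  have hclone {y : V} : nbrTrace G (Function.update f p u) y = insert p (g7Nbrs p) ↔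
      G.Adj y u ∧ IsClone G f p y := by
    rw [← nbrTrace_apply hf, nbrTrace_update_eq_insert_iff]
  have hwz := nonadjTraces_of_not_adj hP hB (Function.update f p u) (mt G.adj_symm hzw)
  rw [hf', hclone.mpr ⟨huw.symm, hw⟩] at hwz
  have hp : p ∈ nbrTrace G (Function.update f p u) z := by simpa [mem_nbrTrace] using hzu
  exact (hclone.mp ((isG7Trace_nbrTrace hP hB hf' z).eq_insert_of_nonadjTraces hp hwz)).2

theorem nbrTrace_ne_insert_g7Nbrs (hP : P6Free G) (hB : BullFree G) (hPr : IsPrimeGraph G)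
    (hf : G.comap f = g7) (p : Fin 7) (v : V) : nbrTrace G f v ≠ insert p (g7Nbrs p) := by
  intro hv
  have hiff := nbrTrace_update_eq_insert_iff (G := G) (f := f) (p := p) (u := f p) (w := v)
  rw [Function.update_eq_self, nbrTrace_apply hf] at hiff
  obtain ⟨hadj, hclone⟩ := hiff.mp hv
  obtain ⟨j, hj⟩ : ∃ j, ¬ IsClone G f p (f j) := by
    obtain ⟨j, i, hi, hij⟩ := g7_exists_not_adj_iff p
    rw [← hf] at hij
    exact ⟨j, fun h => hij (h i hi)⟩
  exact hPr.not_adj_of_closed (P := {w | IsClone G f p w})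
    (fun u hu w hw huw z => IsClone.of_adj hP hB hf hu hw huw) hj hclone (fun _ _ => .rfl) hadj

theorem nbrTrace_mem_g7IndepTraces_or_eq (hP : P6Free G) (hB : BullFree G) (hPr : IsPrimeGraph G)
    (hf : G.comap f = g7) (v : V) :
    nbrTrace G f v ∈ g7IndepTraces ∨ nbrTrace G f v = {0, 1, 2, 3} := by
  rcases isG7Trace_nbrTrace hP hB hf v with h | h | h | ⟨p, h⟩
  · exact Or.inl h
  · exact Or.inr h
  · exact absurd h (nbrTrace_ne_univ hP hB hPr hf v)
  · exact absurd h (nbrTrace_ne_insert_g7Nbrs hP hB hPr hf p v)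

theorem nbrTrace_ne_of_adj (hP : P6Free G) (hB : BullFree G) (hPr : IsPrimeGraph G)
    (hf : G.comap f = g7) {u v : V} (hu : nbrTrace G f u ∈ g7IndepTraces) (huv : G.Adj u v) :
    nbrTrace G f u ≠ nbrTrace G f v := by
  intro htrace
  obtain ⟨i, hi⟩ : ∃ i, nbrTrace G f (f i) ≠ nbrTrace G f u := by
    by_contra! h
    have h01 := (h 0).trans (h 1).symm
    rw [nbrTrace_apply hf, nbrTrace_apply hf] at h01
    exact absurd h01 (by decide)
  refine hPr.not_adj_of_closed (P := {y | nbrTrace G f y = nbrTrace G f u}) ?_ hi rfl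
    htrace.symm huv
  intro y hy y' hy' hyy' z hzy hzy'
  have hsplit := splitTraces_of_adj hP hB f hyy' (hy.trans hy'.symm) hzy hzy'
  have hadj := adjTraces_of_adj hP hB f hzy.symm
  rw [hf, hy] at hsplit hadj
  exact eq_of_splitTraces_of_adjTraces hu (nbrTrace_mem_g7IndepTraces_or_eq hP hB hPr hf z)
    hsplit hadj

theorem disjoint_nbrTrace_of_adj (hP : P6Free G) (hB : BullFree G) (hPr : IsPrimeGraph G)
    (hf : G.comap f = g7) {u v : V} (hu : nbrTrace G f u ∈ g7IndepTraces)
    (hv : nbrTrace G f v ∈ g7IndepTraces) (huv : G.Adj u v) :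
    Disjoint (nbrTrace G f u) (nbrTrace G f v) :=
  disjoint_of_adjTraces hu hv (nbrTrace_ne_of_adj hP hB hPr hf hu huv)
    (hf ▸ adjTraces_of_adj hP hB f huv) (hf ▸ adjTraces_of_adj hP hB f huv.symm)

theorem g7_adj_of_triangle (hP : P6Free G) (hB : BullFree G) (hPr : IsPrimeGraph G)
    (hf : G.comap f = g7) {a b e : V} (ha : nbrTrace G f a ∈ g7IndepTraces)
    (hb : nbrTrace G f b ∈ g7IndepTraces) (he : nbrTrace G f e ∈ g7IndepTraces)
    (hab : G.Adj a b) (hae : G.Adj a e) (hbe : G.Adj b e) {i j : Fin 7}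
    (hi : i ∈ nbrTrace G f a) (hj : j ∈ nbrTrace G f b) : g7.Adj i j := by
  rw [← hf]
  exact hB.adj_of_mem_nbrTrace hab hae hbe (disjoint_nbrTrace_of_adj hP hB hPr hf ha hb hab)
    (disjoint_nbrTrace_of_adj hP hB hPr hf ha he hae)
    (disjoint_nbrTrace_of_adj hP hB hPr hf hb he hbe) hi hj

theorem nbrTrace_nonempty_of_triangle (hP : P6Free G) (hB : BullFree G) (hPr : IsPrimeGraph G)
    (hf : G.comap f = g7) {a b e : V} (ha : nbrTrace G f a ∈ g7IndepTraces)
    (hb : nbrTrace G f b ∈ g7IndepTraces) (he : nbrTrace G f e ∈ g7IndepTraces)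
    (hab : G.Adj a b) (hae : G.Adj a e) (hbe : G.Adj b e) : (nbrTrace G f a).Nonempty := by
  rw [Finset.nonempty_iff_ne_empty]
  intro hempty
  have hab' := adjTraces_of_adj hP hB f hab
  have hae' := adjTraces_of_adj hP hB f hae
  rw [hf, hempty] at hab' hae'
  have hb_ne := hempty ▸ (nbrTrace_ne_of_adj hP hB hPr hf ha hab).symm
  have he_ne := hempty ▸ (nbrTrace_ne_of_adj hP hB hPr hf ha hae).symm
  exact not_adjTraces_empty_of_complete hb he hb_ne he_ne
    (fun i hi j hj => g7_adj_of_triangle hP hB hPr hf hb he ha hbe hab.symm hae.symm hi hj)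
    hab' hae'

theorem not_triangle_of_nbrTrace_mem (hP : P6Free G) (hB : BullFree G) (hPr : IsPrimeGraph G)
    (hf : G.comap f = g7) {a b e : V} (ha : nbrTrace G f a ∈ g7IndepTraces)
    (hb : nbrTrace G f b ∈ g7IndepTraces) (he : nbrTrace G f e ∈ g7IndepTraces)
    (hab : G.Adj a b) (hae : G.Adj a e) : ¬ G.Adj b e := by
  intro hbe
  obtain ⟨i, hi⟩ := nbrTrace_nonempty_of_triangle hP hB hPr hf ha hb he hab hae hbe
  obtain ⟨j, hj⟩ := nbrTrace_nonempty_of_triangle hP hB hPr hf hb ha he hab.symm hbe hae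
  obtain ⟨k, hk⟩ := nbrTrace_nonempty_of_triangle hP hB hPr hf he ha hb hae.symm hbe.symm hab
  exact g7_cliqueFree {i, j, k} (is3Clique_triple_iff.mpr
    ⟨g7_adj_of_triangle hP hB hPr hf ha hb he hab hae hbe hi hj,
      g7_adj_of_triangle hP hB hPr hf ha he hb hae hab hbe.symm hi hk,
      g7_adj_of_triangle hP hB hPr hf hb he ha hbe hab.symm hae.symm hj hk⟩)

end InducedG7

theorem IsInducedC5.comap_append_eq_g7 {G : SimpleGraph V} {c : Fin 5 → V} (hc : IsInducedC5 G c)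
    {d x : V} (hd : ∀ i, G.Adj d (c i) ↔ i = 0 ∨ i = 3) (hx : ∀ i, ¬ G.Adj x (c i))
    (hxd : G.Adj x d) : G.comap (Fin.append c ![d, x]) = g7 := by
  have hleft : ∀ i k, G.Adj (c i) (![d, x] k) ↔ (i = 0 ∨ i = 3) ∧ k = 0 := by
    simp [Fin.forall_fin_two, G.adj_comm (c _), hd, hx]
  have hright : ∀ k l, G.Adj (![d, x] k) (![d, x] l) ↔ k ≠ l := by
    simp [Fin.forall_fin_two, hxd, hxd.symm]
  ext i j
  rw [comap_adj]
  induction i using Fin.addCases <;> induction j using Fin.addCases <;>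
    simp only [Fin.append_left, Fin.append_right, hc.2, hleft, hright, G.adj_comm (![d, x] _)] <;>
    decide +revert

theorem notMem_range_and_nbrCount_eq_four {G : SimpleGraph V} [DecidableRel G.Adj] {c : Fin 5 → V}
    {d x v : V} (hf : G.comap (Fin.append c ![d, x]) = g7)
    (hv : nbrTrace G (Fin.append c ![d, x]) v = {0, 1, 2, 3}) :
    v ∉ Set.range c ∧ nbrCount G c v = 4 := by
  constructor
  · rintro ⟨i, rfl⟩
    rw [← Fin.append_left c ![d, x] i, nbrTrace_apply hf] at hv
    revert hv
    decide +revert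
  · have hadj (i : Fin 5) : G.Adj v (c i) ↔ i ≠ 4 := by
      rw [← Fin.append_left c ![d, x] i, ← mem_nbrTrace, hv]
      decide +revert
    simp only [nbrCount, hadj]
    rfl

theorem stmt12 (G : SimpleGraph V) [DecidableRel G.Adj]
    (hP : P6Free G) (hB : BullFree G) (hPr : IsPrimeGraph G)
    (c : Fin 5 → V) (hc : IsInducedC5 G c)
    (d : V) (hd : d ∉ Set.range c)
    (hd0 : G.Adj d (c 0)) (hd3 : G.Adj d (c 3))
    (hdno : ∀ i : Fin 5, i ≠ 0 → i ≠ 3 → ¬ G.Adj d (c i))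
    (x : V) (hx : x ∉ Set.range c) (hxd : G.Adj x d) (hxne : x ≠ d)
    (hx0 : ∀ i : Fin 5, ¬ G.Adj x (c i))
    (F : Set V) (hF : F = {v : V | v ∉ Set.range c ∧ nbrCount G c v = 4}) :
    ¬ ∃ a b e : V, a ∉ F ∧ b ∉ F ∧ e ∉ F ∧ G.Adj a b ∧ G.Adj a e ∧ G.Adj b e := by
  have hd_iff (i : Fin 5) : G.Adj d (c i) ↔ i = 0 ∨ i = 3 :=
    ⟨fun h => by_contra fun hi => hdno i (mt Or.inl hi) (mt Or.inr hi) h, by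
      rintro (rfl | rfl) <;> assumption⟩
  have hf := hc.comap_append_eq_g7 hd_iff hx0 hxd
  have htrace {v : V} (hv : v ∉ F) :
      nbrTrace G (Fin.append c ![d, x]) v ∈ g7IndepTraces :=
    (nbrTrace_mem_g7IndepTraces_or_eq hP hB hPr hf v).resolve_right fun h =>
      hv (hF ▸ notMem_range_and_nbrCount_eq_four hf h)
  rintro ⟨a, b, e, ha, hb, he, hab, hae, hbe⟩
  exact not_triangle_of_nbrTrace_mem hP hB hPr hf (htrace ha) (htrace hb) (htrace he) hab hae hbe
end

section
/- Let G be a prime (P6, bull)-free graph, let x be a vertex of G, and let K be a connected component of the subgraph induced on the non-neighbors of x (excluding x). Then either K is a perfect graph or K contains an induced 5-cycle. -/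
open SimpleGraph

variable {V : Type*}

/-- The clique number of a graph, as an extended natural number. -/
noncomputable def cliqueNumE {W : Type*} (H : SimpleGraph W) : ℕ∞ :=
  sSup {n : ℕ∞ | ∃ m : ℕ, n = m ∧ ∃ t : Finset W, H.IsNClique m t}

/-- A graph is perfect if every induced subgraph has chromatic number equal to
its clique number. -/
def IsPerfect {W : Type*} (H : SimpleGraph W) : Prop :=
  ∀ S : Set W, (H.induce S).chromaticNumber = cliqueNumE (H.induce S)

/-!
By de Bruijn and Erdős, an imperfect graph has a finite minimal imperfect induced subgraph `M`.
Such an `M` is connected, prime (Lovász's substitution argument), and every independent set of `M`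
misses some maximum clique; if `M` is `P6`- and `C5`-free, this clique has at least three vertices,
since otherwise colouring by the parity of the distance to a root uses two colours.

Let `M` be anticomplete to `x`. As `G` is prime and bull-free, there is an edge `py` such that `p`
is anticomplete to `M` and `y` is mixed on `M`. Let `A` be the set of neighbours of `y` in `M`.
Because `M` is prime, `A` together with the vertices of `M` outside `A` with no neighbour in `A` is
independent, so some maximum clique `T` misses it. Each vertex of `T` is then hit by `A`, but no
vertex of `A` is complete to `T`, so some `a, d ∈ A` and `b, c ∈ T` form an induced path `a b c d`.
A third vertex of `T` is complete to this path. Unless `M` contains a `C5`, closing the path under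
pendants and clones gives a proper homogeneous set of `M`, a contradiction.
-/

section ForbiddenPatterns

variable {G : SimpleGraph V}

theorem BullFree.false_of_adj (hB : BullFree G) {a b c d e : V}
    (hab : G.Adj a b) (hbc : G.Adj b c) (hcd : G.Adj c d) (hbe : G.Adj b e) (hce : G.Adj c e)
    (hac : ¬G.Adj a c) (had : ¬G.Adj a d) (hae : ¬G.Adj a e) (hbd : ¬G.Adj b d)
    (hde : ¬G.Adj d e) : False :=
  hB a b c d e ⟨hab.ne, fun h => had (h ▸ hcd), fun h => hac (h ▸ hcd.symm),
    fun h => hac (h ▸ hce.symm), hbc.ne, fun h => had (h ▸ hab), hbe.ne, hcd.ne, hce.ne,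
    fun h => hbd (h ▸ hbe), hab, hbc, hcd, hbe, hce, hac, had, hae, hbd, hde⟩

theorem P6Free.false_of_adj (hP : P6Free G) {a b c d e f : V}
    (hab : G.Adj a b) (hbc : G.Adj b c) (hcd : G.Adj c d) (hde : G.Adj d e) (hef : G.Adj e f)
    (hac : ¬G.Adj a c) (had : ¬G.Adj a d) (hae : ¬G.Adj a e) (haf : ¬G.Adj a f)
    (hbd : ¬G.Adj b d) (hbe : ¬G.Adj b e) (hbf : ¬G.Adj b f) (hce : ¬G.Adj c e)
    (hcf : ¬G.Adj c f) (hdf : ¬G.Adj d f) : False := by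
  have hadj : ∀ i j : Fin 6, G.Adj (![a, b, c, d, e, f] i) (![a, b, c, d, e, f] j) ↔
      (i.val + 1 = j.val ∨ j.val + 1 = i.val) := by
    intro i j
    fin_cases i <;> fin_cases j <;> simp [*, G.adj_comm]
  have twinFree : ∀ i j : Fin 6, (∀ k : Fin 6, (i.val + 1 = k.val ∨ k.val + 1 = i.val) ↔
      (j.val + 1 = k.val ∨ k.val + 1 = j.val)) → i = j := by decide
  exact hP ⟨_, fun i j hij => twinFree i j fun k => by rw [← hadj, ← hadj, hij], hadj⟩

theorem isInducedC5_of_adj {a b c d e : V}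
    (hab : G.Adj a b) (hbc : G.Adj b c) (hcd : G.Adj c d) (hde : G.Adj d e) (hae : G.Adj a e)
    (hac : ¬G.Adj a c) (had : ¬G.Adj a d) (hbd : ¬G.Adj b d) (hbe : ¬G.Adj b e)
    (hce : ¬G.Adj c e) : IsInducedC5 G ![a, b, c, d, e] := by
  have hadj : ∀ i j : Fin 5, G.Adj (![a, b, c, d, e] i) (![a, b, c, d, e] j) ↔
      (j = i + 1 ∨ i = j + 1) := by
    intro i j
    fin_cases i <;> fin_cases j <;> simp [*, G.adj_comm]
  have twinFree : ∀ i j : Fin 5, (∀ k : Fin 5, (k = i + 1 ∨ i = k + 1) ↔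
      (k = j + 1 ∨ j = k + 1)) → i = j := by decide
  exact ⟨fun i j hij => twinFree i j fun k => by rw [← hadj, ← hadj, hij], hadj⟩

variable {W : Type*} {H : SimpleGraph W}

theorem P6Free.of_embedding (hP : P6Free G) (φ : H ↪g G) : P6Free H :=
  fun ⟨q, hq, hadj⟩ =>
    hP ⟨φ ∘ q, φ.injective.comp hq, fun i j => φ.map_adj_iff.trans (hadj i j)⟩

theorem isInducedC5_embedding_comp_iff (φ : H ↪g G) {c : Fin 5 → W} :
    IsInducedC5 G (φ ∘ c) ↔ IsInducedC5 H c := by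
  simp only [IsInducedC5, φ.injective.of_comp_iff, Function.comp_apply, φ.map_adj_iff]

end ForbiddenPatterns

section PrimeGraphs

variable {W : Type*} {H : SimpleGraph W}

theorem IsPrimeGraph.reflTransGen (hH : IsPrimeGraph H) {r : W → W → Prop} {u v : W}
    (huv : u ≠ v) (hr : r u v)
    (hclosed : ∀ s t z, Relation.ReflTransGen r u s → r s t → ¬Relation.ReflTransGen r u z →
      (H.Adj z s ↔ H.Adj z t)) (w : W) : Relation.ReflTransGen r u w := by
  by_contra hw
  refine hH ⟨{s | Relation.ReflTransGen r u s}, fun z hz => ?_,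
    ⟨u, .refl, v, .single hr, huv⟩, fun h => hw (h.ge (Set.mem_univ w))⟩
  have adj_iff : ∀ s, Relation.ReflTransGen r u s → (H.Adj z u ↔ H.Adj z s) := fun s hs => by
    induction hs with
    | refl => rfl
    | tail hs hst ih => exact ih.trans (hclosed _ _ z hs hst hz)
  by_cases hzu : H.Adj z u
  · exact .inl fun s hs => (adj_iff s hs).1 hzu
  · exact .inr fun s hs hzs => hzu ((adj_iff s hs).2 hzs)

/- A component of `H.induce U` with an edge would be a proper homogeneous set. -/
theorem IsPrimeGraph.isIndepSet (hH : IsPrimeGraph H) {U : Set W} (hU : U ≠ Set.univ)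
    (hedge : ∀ s ∈ U, ∀ t ∈ U, ∀ z ∉ U, H.Adj s t → H.Adj z s → H.Adj z t) :
    H.IsIndepSet U := by
  intro s hs t ht hst hadj
  obtain ⟨w, hw⟩ := (Set.ne_univ_iff_exists_notMem U).1 hU
  have mem_U : ∀ z, Relation.ReflTransGen (fun s t => H.Adj s t ∧ s ∈ U ∧ t ∈ U) s z → z ∈ U :=
    fun z hz => by
      cases hz with
      | refl => exact hs
      | tail _ h => exact h.2.2
  refine hw (mem_U w (hH.reflTransGen hst ⟨hadj, hs, ht⟩ ?_ w))
  rintro u v z hu ⟨huv, huU, hvU⟩ hz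
  have notMem_U : ∀ {u'}, Relation.ReflTransGen _ s u' → u' ∈ U → H.Adj z u' → z ∉ U :=
    fun hu' hu'U hzu' hzU => hz (hu'.tail ⟨hzu'.symm, hu'U, hzU⟩)
  exact ⟨fun h => hedge u huU v hvU z (notMem_U hu huU h) huv h,
    fun h => hedge v hvU u huU z (notMem_U (hu.tail ⟨huv, huU, hvU⟩) hvU h) huv.symm h⟩

end PrimeGraphs

section Tails

variable {G : SimpleGraph V} {M : Set V}

theorem exists_adj_and_not_of_preconnected {W : Type*} {H : SimpleGraph W} (hH : H.Preconnected)
    {P : W → Prop} {u v : W} (hu : P u) (hv : ¬P v) : ∃ s t, H.Adj s t ∧ P s ∧ ¬P t :=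
  let ⟨d, _, hfst, hsnd⟩ := (hH u v).some.exists_boundary_dart {w | P w} hu hv
  ⟨d.fst, d.snd, d.adj, hfst, hsnd⟩

/-- The path `p y` is a tail of `M`: `p` has no neighbour in `M`, while `y` has both a neighbour
and a nonneighbour in `M`. -/
structure IsTail (G : SimpleGraph V) (M : Set V) (p y : V) : Prop where
  adj : G.Adj p y
  anticomplete : ∀ m ∈ M, ¬G.Adj p m
  exists_adj : ∃ m ∈ M, G.Adj y m
  exists_not_adj : ∃ m ∈ M, ¬G.Adj y m

/-- The vertices without a neighbour in `M`. -/
def anticompleteSet (G : SimpleGraph V) (M : Set V) : Set V := {v | ∀ m ∈ M, ¬G.Adj v m}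

/-- The vertices complete to `M` that have a neighbour in `anticompleteSet G M`. -/
def linkSet (G : SimpleGraph V) (M : Set V) : Set V :=
  {v | (∀ m ∈ M, G.Adj v m) ∧ ∃ p ∈ anticompleteSet G M, G.Adj p v}

/-- The vertices complete to `M` that have a nonneighbour in `linkSet G M`. As a vertex is not
adjacent to itself, this includes `linkSet G M`. -/
def linkClosure (G : SimpleGraph V) (M : Set V) : Set V :=
  {v | (∀ m ∈ M, G.Adj v m) ∧ ∃ u ∈ linkSet G M, ¬G.Adj u v}

theorem linkSet_subset_linkClosure : linkSet G M ⊆ linkClosure G M :=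
  fun v hv => ⟨hv.1, v, hv, G.irrefl⟩

theorem exists_adj_of_notMem_anticompleteSet {s : V} (hs : s ∉ anticompleteSet G M) :
    ∃ m ∈ M, G.Adj s m := by
  simpa only [anticompleteSet, Set.mem_ofPred_eq, not_forall, not_not, exists_prop] using hs

theorem not_adj_of_mem_anticompleteSet (htail : ∀ p y, ¬IsTail G M p y) {v s : V}
    (hv : v ∈ anticompleteSet G M) (hs : s ∉ anticompleteSet G M) (hs' : s ∉ linkClosure G M) :
    ¬G.Adj v s := by
  intro hvs
  have hsM : ∀ m ∈ M, G.Adj s m := by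
    by_contra! hsM
    exact htail v s ⟨hvs, hv, exists_adj_of_notMem_anticompleteSet hs, hsM⟩
  exact hs' (linkSet_subset_linkClosure ⟨hsM, v, hv, hvs⟩)

theorem adj_of_mem_linkSet (hB : BullFree G) (htail : ∀ p y, ¬IsTail G M p y)
    (hM : (G.induce M).Preconnected) {v s : V} (hv : v ∈ linkSet G M)
    (hs : s ∉ anticompleteSet G M) (hs' : s ∉ linkClosure G M) : G.Adj v s := by
  by_contra hvs
  obtain ⟨m, hm, hsm⟩ := exists_adj_of_notMem_anticompleteSet hs
  obtain ⟨m', hm', hsm'⟩ : ∃ m ∈ M, ¬G.Adj s m := by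
    by_contra! hsM
    exact hs' ⟨hsM, v, hv, hvs⟩
  obtain ⟨a, b, hab, hsa, hsb⟩ := exists_adj_and_not_of_preconnected hM
    (P := fun w => G.Adj s w) (u := ⟨m, hm⟩) (v := ⟨m', hm'⟩) hsm hsm'
  obtain ⟨hvM, p, hp, hpv⟩ := hv
  exact hB.false_of_adj hpv (hvM a a.2) hsa.symm (hvM b b.2) hab (hp a a.2)
    (not_adj_of_mem_anticompleteSet htail hp hs hs') (hp b b.2) hvs hsb

theorem adj_of_mem_linkClosure (hB : BullFree G) (htail : ∀ p y, ¬IsTail G M p y)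
    (hM : (G.induce M).Preconnected) {v s : V} (hv : v ∈ linkClosure G M)
    (hs : s ∉ anticompleteSet G M) (hs' : s ∉ linkClosure G M) : G.Adj v s := by
  by_cases hvY : v ∈ linkSet G M
  · exact adj_of_mem_linkSet hB htail hM hvY hs hs'
  by_contra hvs
  obtain ⟨hvM, u, hu, huv⟩ := hv
  obtain ⟨m, hm, hsm⟩ := exists_adj_of_notMem_anticompleteSet hs
  have hus : G.Adj u s := adj_of_mem_linkSet hB htail hM hu hs hs'
  obtain ⟨huM, p, hp, hpu⟩ := hu
  exact hB.false_of_adj hpu (huM m hm) (hvM m hm).symm hus hsm.symm (hp m hm)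
    (fun hpv => hvY ⟨hvM, p, hp, hpv⟩) (not_adj_of_mem_anticompleteSet htail hp hs hs') huv hvs

/- Without a tail, the complement of `anticompleteSet G M ∪ linkClosure G M` would be a proper
homogeneous set. -/
theorem exists_isTail (hPr : IsPrimeGraph G) (hB : BullFree G)
    (hM : (G.induce M).Preconnected) (hM₂ : M.Nontrivial) {x : V} (hx : ∀ m ∈ M, ¬G.Adj x m) :
    ∃ p y, IsTail G M p y := by
  by_contra! htail
  have M_subset : M ⊆ {v | v ∉ anticompleteSet G M ∧ v ∉ linkClosure G M} := by
    intro m hm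
    have : Nontrivial M := hM₂.coe_sort
    obtain ⟨m', hmm'⟩ := hM.exists_adj_of_nontrivial ⟨m, hm⟩
    exact ⟨fun h => h m' m'.2 hmm', fun h => G.irrefl (h.1 m hm)⟩
  obtain ⟨a, ha, b, hb, hab⟩ := hM₂
  refine hPr ⟨_, fun v hv => ?_, ⟨a, M_subset ha, b, M_subset hb, hab⟩,
    fun h => (h.ge (Set.mem_univ x)).1 hx⟩
  by_cases hvX : v ∈ anticompleteSet G M
  · exact .inr fun s hs => not_adj_of_mem_anticompleteSet htail hvX hs.1 hs.2
  · have hvY : v ∈ linkClosure G M := by_contra fun hvY => hv ⟨hvX, hvY⟩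
    exact .inl fun s hs => adj_of_mem_linkClosure hB htail hM hvY hs.1 hs.2

end Tails

section Ears

variable {G : SimpleGraph V}

/-- `a b c d` is an ear at `y`: an induced path whose end vertices, but not its inner vertices,
are adjacent to `y`. -/
structure IsEar (G : SimpleGraph V) (y a b c d : V) : Prop where
  adj_ya : G.Adj y a
  adj_yd : G.Adj y d
  not_adj_yb : ¬G.Adj y b
  not_adj_yc : ¬G.Adj y c
  adj_ab : G.Adj a b
  adj_bc : G.Adj b c
  adj_cd : G.Adj c d
  not_adj_ac : ¬G.Adj a c
  not_adj_ad : ¬G.Adj a d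
  not_adj_bd : ¬G.Adj b d

/-- `z` is adjacent to all four vertices of the path `a b c d`. -/
def IsCompleteToPath (G : SimpleGraph V) (z a b c d : V) : Prop :=
  G.Adj z a ∧ G.Adj z b ∧ G.Adj z c ∧ G.Adj z d

/-- `z` is adjacent to none of the four vertices of the path `a b c d`. -/
def IsAnticompleteToPath (G : SimpleGraph V) (z a b c d : V) : Prop :=
  ¬G.Adj z a ∧ ¬G.Adj z b ∧ ¬G.Adj z c ∧ ¬G.Adj z d

/-- `z` is pendant on the path `a b c d`: its only neighbour on the path is one of the ends. -/
def IsPendantOnPath (G : SimpleGraph V) (z a b c d : V) : Prop :=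
  (G.Adj z a ∧ ¬G.Adj z b ∧ ¬G.Adj z c ∧ ¬G.Adj z d) ∨
    (G.Adj z d ∧ ¬G.Adj z c ∧ ¬G.Adj z b ∧ ¬G.Adj z a)

/-- `z` can replace one of the vertices of the ear `a b c d` at `y`. -/
def IsCloneOnEar (G : SimpleGraph V) (y z a b c d : V) : Prop :=
  IsEar G y z b c d ∨ IsEar G y a z c d ∨ IsEar G y a b z d ∨ IsEar G y a b c z

variable {y z a b c d : V}

theorem IsEar.reverse (h : IsEar G y a b c d) : IsEar G y d c b a where
  adj_ya := h.adj_yd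
  adj_yd := h.adj_ya
  not_adj_yb := h.not_adj_yc
  not_adj_yc := h.not_adj_yb
  adj_ab := h.adj_cd.symm
  adj_bc := h.adj_bc.symm
  adj_cd := h.adj_ab.symm
  not_adj_ac := fun hdb => h.not_adj_bd hdb.symm
  not_adj_ad := fun hda => h.not_adj_ad hda.symm
  not_adj_bd := fun hca => h.not_adj_ac hca.symm

theorem IsCompleteToPath.reverse (h : IsCompleteToPath G z a b c d) :
    IsCompleteToPath G z d c b a :=
  ⟨h.2.2.2, h.2.2.1, h.2.1, h.1⟩

theorem IsAnticompleteToPath.reverse (h : IsAnticompleteToPath G z a b c d) :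
    IsAnticompleteToPath G z d c b a :=
  ⟨h.2.2.2, h.2.2.1, h.2.1, h.1⟩

theorem IsCloneOnEar.reverse : IsCloneOnEar G y z a b c d → IsCloneOnEar G y z d c b a
  | .inl h => .inr (.inr (.inr h.reverse))
  | .inr (.inl h) => .inr (.inr (.inl h.reverse))
  | .inr (.inr (.inl h)) => .inr (.inl h.reverse)
  | .inr (.inr (.inr h)) => .inl h.reverse

theorem IsCompleteToPath.adj_of_isPendantOnPath (hB : BullFree G) (hear : IsEar G y a b c d)
    {w : V} (hw : IsCompleteToPath G w a b c d) (hz : IsPendantOnPath G z a b c d) :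
    G.Adj w z := by
  wlog hza : G.Adj z a ∧ ¬G.Adj z b ∧ ¬G.Adj z c ∧ ¬G.Adj z d generalizing a b c d
  · exact this hear.reverse hw.reverse hz.symm (hz.resolve_left hza)
  obtain ⟨hza, hzb, -, hzd⟩ := hza
  by_contra hwz
  exact hB.false_of_adj hza hw.1.symm hw.2.2.2 hear.adj_ab hw.2.1 (fun h => hwz h.symm) hzd hzb
    hear.not_adj_ad fun h => hear.not_adj_bd h.symm

theorem IsAnticompleteToPath.not_adj_of_isPendantOnPath (hP : P6Free G)
    (hear : IsEar G y a b c d) {w : V} (hw : IsAnticompleteToPath G w a b c d)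
    (hz : IsPendantOnPath G z a b c d) : ¬G.Adj w z := by
  wlog hza : G.Adj z a ∧ ¬G.Adj z b ∧ ¬G.Adj z c ∧ ¬G.Adj z d generalizing a b c d
  · exact this hear.reverse hw.reverse hz.symm (hz.resolve_left hza)
  obtain ⟨hza, hzb, hzc, hzd⟩ := hza
  obtain ⟨hwa, hwb, hwc, hwd⟩ := hw
  exact fun hwz => hP.false_of_adj hwz hza hear.adj_ab hear.adj_bc hear.adj_cd hwa hwb hwc hwd
    hzb hzc hzd hear.not_adj_ac hear.not_adj_ad hear.not_adj_bd

end Ears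

section EarsOverTails

variable {G : SimpleGraph V} {M : Set V} {p y : V}

theorem IsTail.isIndepSet_neighbors (ht : IsTail G M p y) (hB : BullFree G)
    (hM : IsPrimeGraph (G.induce M)) : (G.induce M).IsIndepSet {m | G.Adj y m} := by
  obtain ⟨m, hm, hym⟩ := ht.exists_not_adj
  refine hM.isIndepSet (fun h => hym (h.ge (Set.mem_univ (⟨m, hm⟩ : M)))) ?_
  intro s hys t hyt z hyz hst hzs
  by_contra hzt
  exact hB.false_of_adj ht.adj hys hzs.symm hyt hst (ht.anticomplete s s.2)
    (ht.anticomplete z z.2) (ht.anticomplete t t.2) hyz hzt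

theorem IsTail.isIndepSet_far (ht : IsTail G M p y) (hP : P6Free G)
    (hM : IsPrimeGraph (G.induce M)) :
    (G.induce M).IsIndepSet {m | ¬G.Adj y m ∧ ∀ a : M, G.Adj y a → ¬G.Adj a m} := by
  obtain ⟨m, hm, hym⟩ := ht.exists_adj
  refine hM.isIndepSet (fun h => (h.ge (Set.mem_univ (⟨m, hm⟩ : M))).1 hym) ?_
  rintro s ⟨hys, hs⟩ t ⟨hyt, ht'⟩ z hz hst hzs
  by_contra hzt
  have hyz : ¬G.Adj y z := fun hyz => hs z hyz hzs
  obtain ⟨a, hya, haz⟩ : ∃ a : M, G.Adj y a ∧ G.Adj a z := by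
    by_contra! h
    exact hz ⟨hyz, h⟩
  exact hP.false_of_adj ht.adj hya haz hzs hst (ht.anticomplete a a.2) (ht.anticomplete z z.2)
    (ht.anticomplete s s.2) (ht.anticomplete t t.2) hyz hys hyt (hs a hya) (ht' a hya) hzt

theorem IsTail.not_adj_of_adj (ht : IsTail G M p y) (hB : BullFree G)
    (hM : IsPrimeGraph (G.induce M)) {a z : M} (hya : G.Adj y a) (hyz : G.Adj y z) :
    ¬G.Adj z a :=
  fun hza => ht.isIndepSet_neighbors hB hM hyz hya (fun h => hza.ne (congrArg _ h)) hza

variable {a b c d z : M}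

theorem IsEar.not_adj_third (hear : IsEar G y a b c d) (ht : IsTail G M p y) (hB : BullFree G)
    (hM : IsPrimeGraph (G.induce M)) (hyz : G.Adj y z) (hzb : G.Adj z b) : ¬G.Adj z c :=
  fun hzc => hB.false_of_adj hear.adj_ab hear.adj_bc hear.adj_cd hzb.symm hzc.symm
    hear.not_adj_ac hear.not_adj_ad (ht.not_adj_of_adj hB hM hyz hear.adj_ya) hear.not_adj_bd
    (ht.not_adj_of_adj hB hM hyz hear.adj_yd)

theorem IsEar.adj_third (hear : IsEar G y a b c d) (ht : IsTail G M p y) (hB : BullFree G)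
    (hM : IsPrimeGraph (G.induce M)) (hza : G.Adj z a) (hzb : G.Adj z b) : G.Adj z c := by
  by_contra hzc
  have hyz : ¬G.Adj y z := fun hyz => ht.not_adj_of_adj hB hM hear.adj_ya hyz hza
  exact hB.false_of_adj hear.adj_ya hear.adj_ab hear.adj_bc hza.symm hzb.symm hear.not_adj_yb
    hear.not_adj_yc hyz hear.not_adj_ac fun h => hzc h.symm

theorem IsEar.isIndepSet_second_clones (hear : IsEar G y a b c d) (ht : IsTail G M p y)
    (hB : BullFree G) (hM : IsPrimeGraph (G.induce M)) :
    (G.induce M).IsIndepSet {w | IsEar G y a w c d} := by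
  refine hM.isIndepSet (fun h => (h.ge (Set.mem_univ a)).not_adj_yb hear.adj_ya) ?_
  intro s hs t ht' z hz hst hzs
  by_contra hzt
  by_cases hyz : G.Adj y z
  · have hzd : ¬G.Adj z d := ht.not_adj_of_adj hB hM hs.adj_yd hyz
    exact hB.false_of_adj hzs hs.adj_bc hs.adj_cd hst ht'.adj_bc.symm
      (hs.not_adj_third ht hB hM hyz hzs) hzd hzt hs.not_adj_bd fun h => ht'.not_adj_bd h.symm
  have hza : G.Adj z a := by
    by_contra hza
    exact hB.false_of_adj hzs hs.adj_ab.symm hs.adj_ya.symm hst ht'.adj_ab hza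
      (fun h => hyz h.symm) hzt (fun h => hs.not_adj_yb h.symm) ht'.not_adj_yb
  have hzc : G.Adj z c := hs.adj_third ht hB hM hza hzs
  have hzd : G.Adj z d := by
    by_contra hzd
    exact hz { hs with not_adj_yb := hyz, adj_ab := hza.symm, adj_bc := hzc, not_adj_bd := hzd }
  exact hzt (ht'.reverse.adj_third ht hB hM hzd hzc)

theorem IsEar.adj_fourth (hear : IsEar G y a b c d) (ht : IsTail G M p y) (hB : BullFree G)
    (hM : IsPrimeGraph (G.induce M)) (hza : G.Adj z a) (hzb : G.Adj z b) (hzc : G.Adj z c) :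
    G.Adj z d := by
  by_contra hzd
  have hyz : ¬G.Adj y z := fun hyz => ht.not_adj_of_adj hB hM hear.adj_ya hyz hza
  have hear' : IsEar G y a z c d :=
    { hear with not_adj_yb := hyz, adj_ab := hza.symm, adj_bc := hzc, not_adj_bd := hzd }
  exact hear.isIndepSet_second_clones ht hB hM hear' hear (fun h => hzb.ne (congrArg _ h)) hzb

theorem IsEar.isCompleteToPath_of_adj_first_second (hear : IsEar G y a b c d)
    (ht : IsTail G M p y) (hB : BullFree G) (hM : IsPrimeGraph (G.induce M))
    (hza : G.Adj z a) (hzb : G.Adj z b) : IsCompleteToPath G z a b c d :=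
  have hzc : G.Adj z c := hear.adj_third ht hB hM hza hzb
  ⟨hza, hzb, hzc, hear.adj_fourth ht hB hM hza hzb hzc⟩

theorem IsEar.isCompleteToPath_of_adj_second_third (hear : IsEar G y a b c d)
    (ht : IsTail G M p y) (hB : BullFree G) (hM : IsPrimeGraph (G.induce M))
    (hzb : G.Adj z b) (hzc : G.Adj z c) : IsCompleteToPath G z a b c d := by
  by_cases hza : G.Adj z a
  · exact hear.isCompleteToPath_of_adj_first_second ht hB hM hza hzb
  by_cases hzd : G.Adj z d
  · exact (hear.reverse.isCompleteToPath_of_adj_first_second ht hB hM hzd hzc).reverse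
  exact (hB.false_of_adj hear.adj_ab hear.adj_bc hear.adj_cd hzb.symm hzc.symm hear.not_adj_ac
    hear.not_adj_ad (fun h => hza h.symm) hear.not_adj_bd fun h => hzd h.symm).elim

theorem IsEar.complete_or_clone_of_adj_second (hear : IsEar G y a b c d)
    (ht : IsTail G M p y) (hP : P6Free G) (hB : BullFree G) (hM : IsPrimeGraph (G.induce M))
    (hzb : G.Adj z b) : IsCompleteToPath G z a b c d ∨ IsCloneOnEar G y z a b c d := by
  by_cases hza : G.Adj z a
  · exact .inl (hear.isCompleteToPath_of_adj_first_second ht hB hM hza hzb)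
  by_cases hzc : G.Adj z c
  · exact .inl (hear.isCompleteToPath_of_adj_second_third ht hB hM hzb hzc)
  by_cases hyz : G.Adj y z
  · have hzd : ¬G.Adj z d := ht.not_adj_of_adj hB hM hear.adj_yd hyz
    exact .inr (.inl
      { hear with adj_ya := hyz, adj_ab := hzb, not_adj_ac := hzc, not_adj_ad := hzd })
  by_cases hzd : G.Adj z d
  · exact .inr (.inr (.inr (.inl { hear with
      not_adj_yc := hyz, adj_bc := hzb.symm, adj_cd := hzd, not_adj_ac := fun h => hza h.symm })))
  exact (hP.false_of_adj ht.adj hear.adj_yd hear.adj_cd.symm hear.adj_bc.symm hzb.symm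
    (ht.anticomplete d d.2) (ht.anticomplete c c.2) (ht.anticomplete b b.2)
    (ht.anticomplete z z.2) hear.not_adj_yc hear.not_adj_yb hyz
    (fun h => hear.not_adj_bd h.symm) (fun h => hzd h.symm) fun h => hzc h.symm).elim

theorem IsEar.complete_or_anticomplete_or_pendant_or_clone (hear : IsEar G y a b c d)
    (ht : IsTail G M p y) (hP : P6Free G) (hB : BullFree G) (hM : IsPrimeGraph (G.induce M))
    (hC : ∀ v, ¬IsInducedC5 (G.induce M) v) (z : M) :
    IsCompleteToPath G z a b c d ∨ IsAnticompleteToPath G z a b c d ∨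
      IsPendantOnPath G z a b c d ∨ IsCloneOnEar G y z a b c d := by
  by_cases hzb : G.Adj z b
  · exact (hear.complete_or_clone_of_adj_second ht hP hB hM hzb).imp_right (.inr ∘ .inr)
  by_cases hzc : G.Adj z c
  · exact (hear.reverse.complete_or_clone_of_adj_second ht hP hB hM hzc).imp
      (·.reverse) (.inr <| .inr ·.reverse)
  by_cases hza : G.Adj z a <;> by_cases hzd : G.Adj z d
  · exact (hC ![a, b, c, d, z] <| isInducedC5_of_adj (G := G.induce M) hear.adj_ab hear.adj_bc
      hear.adj_cd hzd.symm hza.symm hear.not_adj_ac hear.not_adj_ad hear.not_adj_bd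
      (fun h => hzb h.symm) fun h => hzc h.symm).elim
  · exact .inr (.inr (.inl (.inl ⟨hza, hzb, hzc, hzd⟩)))
  · exact .inr (.inr (.inl (.inr ⟨hzd, hzc, hzb, hza⟩)))
  · exact .inr (.inl ⟨hza, hzb, hzc, hzd⟩)

end EarsOverTails

section CompleteVertices

variable {G : SimpleGraph V} {M : Set V} {p y : V} {a b c d w z : M}

/-- The vertices of the path `a b c d` together with the vertices of `M` pendant on it. -/
def pathBlob (G : SimpleGraph V) {M : Set V} (a b c d : M) : Set M :=
  {v | v = a ∨ v = b ∨ v = c ∨ v = d ∨ IsPendantOnPath G v a b c d}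

/-- `u` and `v` lie in a common blob of an ear at `y` to which `w` is complete. -/
def ShareBlob (G : SimpleGraph V) {M : Set V} (y : V) (w u v : M) : Prop :=
  ∃ a b c d : M, IsEar G y a b c d ∧ IsCompleteToPath G w a b c d ∧
    u ∈ pathBlob G a b c d ∧ v ∈ pathBlob G a b c d

theorem IsCompleteToPath.adj_of_mem_pathBlob (hw : IsCompleteToPath G w a b c d)
    (hear : IsEar G y a b c d) (hB : BullFree G) {v : M} (hv : v ∈ pathBlob G a b c d) :
    G.Adj w v := by
  rcases hv with rfl | rfl | rfl | rfl | hv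
  exacts [hw.1, hw.2.1, hw.2.2.1, hw.2.2.2, hw.adj_of_isPendantOnPath hB hear hv]

theorem IsAnticompleteToPath.not_adj_of_mem_pathBlob (hw : IsAnticompleteToPath G w a b c d)
    (hear : IsEar G y a b c d) (hP : P6Free G) {v : M} (hv : v ∈ pathBlob G a b c d) :
    ¬G.Adj w v := by
  rcases hv with rfl | rfl | rfl | rfl | hv
  exacts [hw.1, hw.2.1, hw.2.2.1, hw.2.2.2, hw.not_adj_of_isPendantOnPath hP hear hv]

theorem IsCloneOnEar.exists_shareBlob (hz : IsCloneOnEar G y z a b c d) (ht : IsTail G M p y)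
    (hB : BullFree G) (hM : IsPrimeGraph (G.induce M)) (hw : IsCompleteToPath G w a b c d) :
    ∃ v ∈ pathBlob G a b c d, ShareBlob G y w v z := by
  obtain ⟨hwa, hwb, hwc, hwd⟩ := hw
  rcases hz with hz | hz | hz | hz
  · exact ⟨b, by simp [pathBlob], z, b, c, d, hz,
      hz.isCompleteToPath_of_adj_second_third ht hB hM hwb hwc, by simp [pathBlob]⟩
  · exact ⟨a, by simp [pathBlob], a, z, c, d, hz,
      (hz.reverse.isCompleteToPath_of_adj_first_second ht hB hM hwd hwc).reverse,
      by simp [pathBlob]⟩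
  · exact ⟨a, by simp [pathBlob], a, b, z, d, hz,
      hz.isCompleteToPath_of_adj_first_second ht hB hM hwa hwb, by simp [pathBlob]⟩
  · exact ⟨a, by simp [pathBlob], a, b, c, z, hz,
      hz.isCompleteToPath_of_adj_second_third ht hB hM hwb hwc, by simp [pathBlob]⟩

theorem ShareBlob.adj_iff_of_not_reflTransGen (ht : IsTail G M p y) (hP : P6Free G)
    (hB : BullFree G) (hM : IsPrimeGraph (G.induce M))
    (hC : ∀ v, ¬IsInducedC5 (G.induce M) v) {u s t : M}
    (hus : Relation.ReflTransGen (ShareBlob G y w) u s) (hst : ShareBlob G y w s t)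
    (huz : ¬Relation.ReflTransGen (ShareBlob G y w) u z) : G.Adj z s ↔ G.Adj z t := by
  obtain ⟨a, b, c, d, hear, hw, hs, ht'⟩ := hst
  have hclone : ¬IsCloneOnEar G y z a b c d := by
    intro hz
    obtain ⟨v, hv, hvz⟩ := hz.exists_shareBlob ht hB hM hw
    exact huz ((hus.tail ⟨a, b, c, d, hear, hw, hs, hv⟩).tail hvz)
  rcases hear.complete_or_anticomplete_or_pendant_or_clone ht hP hB hM hC z with h | h | h | h
  · exact iff_of_true (h.adj_of_mem_pathBlob hear hB hs) (h.adj_of_mem_pathBlob hear hB ht')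
  · exact iff_of_false (h.not_adj_of_mem_pathBlob hear hP hs)
      (h.not_adj_of_mem_pathBlob hear hP ht')
  · exact absurd (hus.tail ⟨a, b, c, d, hear, hw, hs, .inr (.inr (.inr (.inr h)))⟩) huz
  · exact absurd h hclone

/- Chaining the blobs of all ears to which `w` is complete would give a homogeneous set
missing `w`. -/
theorem IsEar.not_isCompleteToPath (hear : IsEar G y a b c d) (ht : IsTail G M p y)
    (hP : P6Free G) (hB : BullFree G) (hM : IsPrimeGraph (G.induce M))
    (hC : ∀ v, ¬IsInducedC5 (G.induce M) v) (w : M) : ¬IsCompleteToPath G w a b c d := by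
  intro hw
  have hab : ShareBlob G y w a b :=
    ⟨a, b, c, d, hear, hw, by simp [pathBlob], by simp [pathBlob]⟩
  have hne : a ≠ b := fun h => hear.adj_ab.ne (congrArg _ h)
  rcases (hM.reflTransGen hne hab
    (fun _ _ _ => ShareBlob.adj_iff_of_not_reflTransGen ht hP hB hM hC) w).cases_tail
    with rfl | ⟨_, -, a', b', c', d', hear', hw', -, hmem⟩
  · exact G.irrefl hw.1
  · exact G.irrefl (hw'.adj_of_mem_pathBlob hear' hB hmem)

end CompleteVertices

section DistanceLevels

variable {W : Type*} {H : SimpleGraph W}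

theorem exists_adj_dist_eq_of_dist_eq_succ (hc : H.Connected) {r u : W} {k : ℕ}
    (hu : H.dist r u = k + 1) : ∃ v, H.Adj u v ∧ H.dist r v = k := by
  obtain ⟨q, hq⟩ := hc.exists_walk_length_eq_dist u r
  rw [dist_comm, hu] at hq
  match q, hq with
  | .cons (v := v) huv q', hq =>
    have hvr : H.dist v r ≤ k := by
      have := dist_le q'
      rw [Walk.length_cons] at hq
      lia
    refine ⟨v, huv, ?_⟩
    rw [dist_comm] at hvr
    have := huv.symm.diff_dist_adj (u := r)
    lia

theorem P6Free.adj_first_last (hP : P6Free H) (hC : ∀ c, ¬IsInducedC5 H c) {a b c d e f : W}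
    (hab : H.Adj a b) (hbc : H.Adj b c) (hcd : H.Adj c d) (hde : H.Adj d e) (hef : H.Adj e f)
    (hac : ¬H.Adj a c) (had : ¬H.Adj a d) (hbd : ¬H.Adj b d) (hbe : ¬H.Adj b e)
    (hce : ¬H.Adj c e) (hcf : ¬H.Adj c f) (hdf : ¬H.Adj d f) : H.Adj a f := by
  by_contra haf
  have hae : ¬H.Adj a e := fun hae =>
    hC _ (isInducedC5_of_adj hab hbc hcd hde hae hac had hbd hbe hce)
  have hbf : ¬H.Adj b f := fun hbf =>
    hC _ (isInducedC5_of_adj hbc hcd hde hef hbf hbd hbe hce hcf hdf)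
  exact hP.false_of_adj hab hbc hcd hde hef hac had hae haf hbd hbe hbf hce hcf hdf

theorem not_adj_of_dist_eq (hc : H.Connected) (hP : P6Free H) (h3 : H.CliqueFree 3)
    (hC : ∀ c, ¬IsInducedC5 H c) {r u v : W} (huv : H.dist r u = H.dist r v) : ¬H.Adj u v := by
  classical
  intro hadj
  have not_adj : ∀ {a b c : W}, H.Adj a b → H.Adj b c → ¬H.Adj a c := fun hab hbc hac =>
    h3 _ (is3Clique_triple_iff.2 ⟨hab, hac, hbc⟩)
  have not_adj_far : ∀ {a b : W}, H.dist r a + 2 ≤ H.dist r b → ¬H.Adj a b := fun hle hab => by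
    have := hab.diff_dist_adj (u := r)
    lia
  induction hk : H.dist r u using Nat.strong_induction_on generalizing u v with
  | _ k ih =>
  match k with
  | 0 =>
    exact hadj.ne ((hc.dist_eq_zero_iff.1 hk).symm.trans (hc.dist_eq_zero_iff.1 (huv ▸ hk)))
  | 1 =>
    exact not_adj (dist_eq_one_iff_adj.1 hk) hadj (dist_eq_one_iff_adj.1 (huv ▸ hk))
  | k + 2 =>
    obtain ⟨u', huu', hu'⟩ := exists_adj_dist_eq_of_dist_eq_succ hc hk
    obtain ⟨v', hvv', hv'⟩ := exists_adj_dist_eq_of_dist_eq_succ hc (huv ▸ hk)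
    obtain ⟨u'', hu'u'', hu''⟩ := exists_adj_dist_eq_of_dist_eq_succ hc hu'
    obtain ⟨v'', hv'v'', hv''⟩ := exists_adj_dist_eq_of_dist_eq_succ hc hv'
    have hu'v' : ¬H.Adj u' v' := fun h => ih (k + 1) (by lia) (hu'.trans hv'.symm) h hu'
    refine ih k (by lia) (hu''.trans hv''.symm) ?_ hu''
    exact hP.adj_first_last hC hu'u''.symm huu'.symm hadj hvv' hv'v'' (not_adj_far (by lia))
      (not_adj_far (by lia)) (not_adj huu'.symm hadj) hu'v' (not_adj hadj hvv')
      (fun h => not_adj_far (by lia) h.symm) fun h => not_adj_far (by lia) h.symm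

theorem colorable_two_of_cliqueFree_three (hc : H.Connected) (hP : P6Free H)
    (h3 : H.CliqueFree 3) (hC : ∀ c, ¬IsInducedC5 H c) : H.Colorable 2 := by
  obtain ⟨r⟩ := hc.nonempty
  refine ⟨Coloring.mk (fun v => (⟨H.dist r v % 2, Nat.mod_lt _ two_pos⟩ : Fin 2)) ?_⟩
  intro u v huv
  have := not_adj_of_dist_eq hc hP h3 hC (r := r) (u := u) (v := v)
  have := huv.diff_dist_adj (u := r)
  grind

end DistanceLevels

section MinimalImperfectGraphs

variable {W : Type*} {H : SimpleGraph W}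

/-- The chromatic number of `H` is at most its clique number; stated through clique-freeness so
that it makes sense when the clique number is infinite. -/
def IsWeaklyPerfect (H : SimpleGraph W) : Prop :=
  ∀ n, H.CliqueFree (n + 1) → H.Colorable n

/-- `H` is minimal imperfect: it violates `χ ≤ ω`, but no proper induced subgraph does. -/
structure IsMinimalImperfect (H : SimpleGraph W) : Prop where
  not_isWeaklyPerfect : ¬IsWeaklyPerfect H
  isWeaklyPerfect_induce : ∀ S : Set W, S ≠ Set.univ → IsWeaklyPerfect (H.induce S)

theorem cliqueFree_of_isMaximumClique [Finite W] {T : Finset W} (hT : H.IsMaximumClique T) :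
    H.CliqueFree (T.card + 1) :=
  fun t ht => by
    have := hT.maximum t ht.isClique
    have := ht.card_eq
    lia

theorem colorable_succ_of_isIndepSet {I : Set W} (hI : H.IsIndepSet I) {n : ℕ}
    (hn : (H.induce Iᶜ).Colorable n) : H.Colorable (n + 1) := by
  classical
  obtain ⟨C⟩ := hn
  let C' : H.Coloring (Option (Fin n)) :=
    Coloring.mk (fun v => if hv : v ∈ I then none else some (C ⟨v, hv⟩)) <| by
      intro u v huv
      by_cases hu : u ∈ I <;> by_cases hv : v ∈ I
      · exact absurd huv (hI hu hv huv.ne)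
      · simp [hu, hv]
      · simp [hu, hv]
      · simpa [hu, hv] using C.valid (v := ⟨u, hu⟩) (w := ⟨v, hv⟩) huv
  simpa using C'.colorable

theorem IsMinimalImperfect.not_colorable [Finite W] (hH : IsMinimalImperfect H) {T : Finset W}
    (hT : H.IsMaximumClique T) : ¬H.Colorable T.card := by
  intro hcol
  refine hH.not_isWeaklyPerfect fun n hn => hcol.mono (not_lt.1 fun hlt => ?_)
  exact (hn.mono hlt) T ⟨hT.isClique, rfl⟩

theorem IsMinimalImperfect.colorable_induce [Finite W] (hH : IsMinimalImperfect H)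
    {T : Finset W} (hT : H.IsMaximumClique T) {S : Set W} (hS : S ≠ Set.univ) :
    (H.induce S).Colorable T.card :=
  hH.isWeaklyPerfect_induce S hS _
    ((cliqueFree_of_isMaximumClique hT).comap ⟨(Embedding.induce S).toCopy⟩)

theorem IsMinimalImperfect.exists_isMaximumClique_disjoint [Finite W]
    (hH : IsMinimalImperfect H) {I : Set W} (hI : H.IsIndepSet I) (hI₀ : I.Nonempty) :
    ∃ T : Finset W, H.IsMaximumClique T ∧ Disjoint (T : Set W) I := by
  obtain ⟨T₀, hT₀⟩ := H.maximumClique_exists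
  obtain ⟨i, hi⟩ := hI₀
  obtain ⟨n, hn⟩ : ∃ n, T₀.card = n + 1 :=
    Nat.exists_eq_add_of_le' (hT₀.maximum {i} (by simp))
  by_contra! hmeet
  refine hH.not_colorable hT₀ (hn ▸ colorable_succ_of_isIndepSet hI ?_)
  refine hH.isWeaklyPerfect_induce Iᶜ (fun h => (h.ge (Set.mem_univ i)) hi) n fun t ht => ?_
  have ht' := (isNClique_induce_iff _ _ _).1 ht
  refine hmeet _ ⟨ht'.isClique, fun s hs => ?_⟩ ?_
  · rw [ht'.card_eq, ← hn]
    exact hT₀.maximum s hs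
  · rw [Set.disjoint_left]
    intro v hv
    obtain ⟨w, -, rfl⟩ := Finset.mem_map.1 hv
    exact w.2

theorem IsMinimalImperfect.connected [Finite W] (hH : IsMinimalImperfect H) : H.Connected := by
  obtain ⟨T, hT⟩ := H.maximumClique_exists
  obtain ⟨c, hc⟩ : ∃ c : H.ConnectedComponent, c.supp = Set.univ := by
    by_contra! hne
    exact hH.not_colorable hT
      (colorable_iff_forall_connectedComponent.2 fun c => hH.colorable_induce hT (hne c))
  refine c.ind (fun r hr => ?_) hc
  exact (connected_iff_exists_forall_reachable H).2
    ⟨r, fun v => (ConnectedComponent.exact (hr.ge (Set.mem_univ v))).symm⟩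

theorem exists_mem_clique_color_eq {S : Set W} {n : ℕ} (C : (H.induce S).Coloring (Fin n))
    {T : Finset W} (hT : H.IsClique T) (hTS : (T : Set W) ⊆ S) (hn : n ≤ T.card) (i : Fin n) :
    ∃ v, ∃ hv : v ∈ S, v ∈ T ∧ C ⟨v, hv⟩ = i := by
  classical
  let T' : Finset S := T.subtype (· ∈ S)
  have hT' : (H.induce S).IsClique T' := fun u hu v hv huv =>
    hT (Finset.mem_subtype.1 hu) (Finset.mem_subtype.1 hv) (Subtype.coe_injective.ne huv)
  have hcard : Fintype.card (Fin n) ≤ T'.card := by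
    rwa [Fintype.card_fin, Finset.card_subtype, Finset.filter_true_of_mem fun v hv => hTS hv]
  obtain ⟨v, hv, hCv⟩ := C.surjOn_of_card_le_isClique hT' hcard (Set.mem_univ i)
  exact ⟨v, v.2, Finset.mem_subtype.1 hv, hCv⟩

theorem IsMinimalImperfect.not_adj_of_twins [Finite W] (hH : IsMinimalImperfect H) {s t : W}
    (hst : ∀ v, v ≠ s → v ≠ t → (H.Adj v s ↔ H.Adj v t)) : ¬H.Adj s t := by
  classical
  intro hadj
  obtain ⟨T₀, hT₀⟩ := H.maximumClique_exists
  obtain ⟨C⟩ := hH.colorable_induce hT₀ (S := {t}ᶜ) (fun h => h.ge (Set.mem_univ t) rfl)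
  let I : Set W := {v | v = t ∨ ∃ hv : v ≠ t, v ≠ s ∧ C ⟨v, hv⟩ = C ⟨s, hadj.ne⟩}
  have not_adj_t : ∀ v ∈ I, ¬H.Adj v t := by
    rintro v (rfl | ⟨hvt, hvs, hCv⟩) hadj'
    · exact H.irrefl hadj'
    · exact C.valid (v := ⟨v, hvt⟩) (w := ⟨s, hadj.ne⟩) ((hst v hvs hvt).2 hadj') hCv
  have hI : H.IsIndepSet I := by
    rintro u hu v hv -
    rcases hv with rfl | ⟨hvt, hvs, hCv⟩
    · exact not_adj_t u hu
    rcases hu with rfl | ⟨hut, -, hCu⟩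
    · exact fun h => not_adj_t v (.inr ⟨hvt, hvs, hCv⟩) h.symm
    · exact fun h => C.valid (v := ⟨u, hut⟩) (w := ⟨v, hvt⟩) h (hCu.trans hCv.symm)
  obtain ⟨T, hT, hTI⟩ := hH.exists_isMaximumClique_disjoint hI ⟨t, .inl rfl⟩
  rw [Set.disjoint_left] at hTI
  have htT : t ∉ T := fun h => hTI h (.inl rfl)
  have hsT : s ∈ T := by
    obtain ⟨v, hvt, hvT, hCv⟩ := exists_mem_clique_color_eq C hT.isClique
      (fun v hv h => htT (h ▸ hv)) (hT.maximum T₀ hT₀.isClique) (C ⟨s, hadj.ne⟩)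
    by_contra hsT
    exact hTI hvT (.inr ⟨hvt, fun h => hsT (h ▸ hvT), hCv⟩)
  have hclique : H.IsClique (insert t T : Finset W) := by
    rw [Finset.coe_insert, isClique_insert]
    refine ⟨hT.isClique, fun v hv hvt => ?_⟩
    by_cases hvs : v = s
    · exact hvs ▸ hadj.symm
    · exact ((hst v hvs hvt.symm).1 (hT.isClique hv hsT hvs)).symm
  have := hT.maximum _ hclique
  rw [Finset.card_insert_of_notMem htT] at this
  lia

theorem IsHomogeneous.nonempty_hom {D : Set W} (hD : IsHomogeneous H D) {T : Finset D}
    (hT : (H.induce D).IsClique T) (hcol : (H.induce D).Colorable T.card) :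
    Nonempty (H →g H.induce {v | ∀ hv : v ∈ D, (⟨v, hv⟩ : D) ∈ T}) := by
  classical
  have C : (H.induce D).Coloring T := hcol.toColoring (by simp)
  have adj_of_adj : ∀ v ∉ D, ∀ u u' : D, H.Adj v u → H.Adj v u' := fun v hv u u' hvu =>
    (hD v hv).elim (fun h => h u' u'.2) fun h => absurd hvu (h u u.2)
  refine ⟨⟨fun v => if hv : v ∈ D then ⟨(C ⟨v, hv⟩ : D), fun _ => (C ⟨v, hv⟩).2⟩
    else ⟨v, fun h => absurd h hv⟩, fun {u v} huv => ?_⟩⟩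
  by_cases hu : u ∈ D <;> by_cases hv : v ∈ D <;> simp only [hu, hv, dite_true, dite_false]
  · exact hT (C ⟨u, hu⟩).2 (C ⟨v, hv⟩).2
      (Subtype.coe_injective.ne (C.valid (v := ⟨u, hu⟩) (w := ⟨v, hv⟩) huv))
  · exact (adj_of_adj v hv ⟨u, hu⟩ _ huv.symm).symm
  · exact adj_of_adj u hu ⟨v, hv⟩ _ huv
  · exact huv

theorem IsMinimalImperfect.isPrimeGraph [Finite W] (hH : IsMinimalImperfect H) :
    IsPrimeGraph H := by
  rintro ⟨D, hD, ⟨a, ha, b, hb, hab⟩, hD'⟩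
  obtain ⟨T₀, hT₀⟩ := H.maximumClique_exists
  obtain ⟨T, hT⟩ := (H.induce D).maximumClique_exists
  have hcol : (H.induce D).Colorable T.card :=
    hH.isWeaklyPerfect_induce D hD' _ (cliqueFree_of_isMaximumClique hT)
  obtain ⟨φ⟩ := hD.nonempty_hom hT.isClique hcol
  by_cases hS : {v | ∀ hv : v ∈ D, (⟨v, hv⟩ : D) ∈ T} = Set.univ
  · have mem_T : ∀ v : D, v ∈ T := fun v => hS.ge (Set.mem_univ (v : W)) v.2
    have adj : ∀ u v : D, u ≠ v → H.Adj u v := fun u v => hT.isClique (mem_T u) (mem_T v)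
    refine hH.not_adj_of_twins (s := a) (t := b) (fun v hva hvb => ?_)
      (adj ⟨a, ha⟩ ⟨b, hb⟩ (by simpa using hab))
    by_cases hv : v ∈ D
    · exact iff_of_true (adj ⟨v, hv⟩ ⟨a, ha⟩ (by simpa using hva))
        (adj ⟨v, hv⟩ ⟨b, hb⟩ (by simpa using hvb))
    · exact (hD v hv).elim (fun h => iff_of_true (h a ha) (h b hb))
        fun h => iff_of_false (h a ha) (h b hb)
  · exact hH.not_colorable hT₀ ((hH.colorable_induce hT₀ hS).of_hom φ)

theorem IsMinimalImperfect.three_le_card [Finite W] (hH : IsMinimalImperfect H)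
    (hP : P6Free H) (hC : ∀ c, ¬IsInducedC5 H c) {T : Finset W} (hT : H.IsMaximumClique T) :
    3 ≤ T.card := by
  by_contra! hlt
  have hfree := cliqueFree_of_isMaximumClique hT
  refine hH.not_colorable hT ?_
  interval_cases T.card
  · rw [colorable_zero_iff]
    exact cliqueFree_one.1 hfree
  · rw [cliqueFree_two.1 hfree]
    exact ⟨Coloring.mk (fun _ => 0) fun h => h.elim⟩
  · exact colorable_two_of_cliqueFree_three hH.connected hP hfree hC

end MinimalImperfectGraphs

section DeBruijnErdos

variable {W X : Type*} {H : SimpleGraph W}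

theorem isWeaklyPerfect_induce_range_iff {G : SimpleGraph X} (φ : H ↪g G) :
    IsWeaklyPerfect (G.induce (Set.range φ)) ↔ IsWeaklyPerfect H := by
  have e := φ.isoInduceRange
  exact ⟨fun h n hn => (h n (hn.comap ⟨e.symm.toEmbedding.toCopy⟩)).of_hom e.toHom,
    fun h n hn => (h n (hn.comap ⟨e.toEmbedding.toCopy⟩)).of_hom e.symm.toHom⟩

theorem isWeaklyPerfect_of_forall_finite_induce
    (h : ∀ S : Set W, S.Finite → IsWeaklyPerfect (H.induce S)) : IsWeaklyPerfect H := by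
  intro n hn
  refine nonempty_hom_of_forall_finite_subgraph_hom fun H' hH' => ?_
  exact (h H'.verts hH' n (hn.comap ⟨(Embedding.induce H'.verts).toCopy⟩)).some.comp
    ⟨id, fun huv => H'.adj_sub huv⟩

theorem IsWeaklyPerfect.chromaticNumber_eq_cliqueNumE (h : IsWeaklyPerfect H) :
    H.chromaticNumber = cliqueNumE H := by
  apply le_antisymm
  · by_cases htop : cliqueNumE H = ⊤
    · exact htop ▸ le_top
    obtain ⟨n, hn⟩ := ENat.ne_top_iff_exists.1 htop
    rw [← hn, chromaticNumber_le_iff_colorable]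
    refine h n fun t ht => ?_
    have : ((n + 1 : ℕ) : ℕ∞) ≤ cliqueNumE H := le_sSup ⟨n + 1, rfl, t, ht⟩
    rw [← hn, Nat.cast_le] at this
    lia
  · refine sSup_le ?_
    rintro _ ⟨m, rfl, t, ht⟩
    exact ht.card_eq ▸ ht.isClique.card_le_chromaticNumber

theorem exists_finset_isMinimalImperfect_of_not_isPerfect {G : SimpleGraph X} (φ : H ↪g G)
    (hH : ¬IsPerfect H) :
    ∃ M : Finset X, (M : Set X) ⊆ Set.range φ ∧ IsMinimalImperfect (G.induce (M : Set X)) := by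
  obtain ⟨S, hS⟩ := not_forall.1 hH
  obtain ⟨F, hF, hF'⟩ : ∃ F : Set S, F.Finite ∧ ¬IsWeaklyPerfect ((H.induce S).induce F) := by
    by_contra! h
    exact hS (isWeaklyPerfect_of_forall_finite_induce h).chromaticNumber_eq_cliqueNumE
  let ψ := (φ.comp (Embedding.induce S)).comp (Embedding.induce F)
  have hψ : Set.range ψ ⊆ Set.range φ := by
    rintro _ ⟨v, rfl⟩
    exact ⟨v, rfl⟩
  have := hF.to_subtype
  let P (M : Finset X) := (M : Set X) ⊆ Set.range φ ∧ ¬IsWeaklyPerfect (G.induce (M : Set X))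
  obtain ⟨M₀, hM₀⟩ := (Set.finite_range ψ).exists_finset_coe
  obtain ⟨M, ⟨hMφ, hM⟩, hmin⟩ := exists_minimal_of_wellFoundedLT P
    ⟨M₀, by rwa [hM₀], by rwa [hM₀, isWeaklyPerfect_induce_range_iff]⟩
  refine ⟨M, hMφ, hM, fun R hR => ?_⟩
  by_contra hR'
  let χ := (Embedding.induce (G := G) (M : Set X)).comp (Embedding.induce R)
  obtain ⟨L, hL⟩ := (Set.finite_range χ).exists_finset_coe
  have hLM : (L : Set X) ⊆ M := by
    rw [hL]
    rintro _ ⟨v, rfl⟩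
    exact v.1.2
  have hML : M ≤ L := hmin
    ⟨hLM.trans hMφ, by rwa [hL, isWeaklyPerfect_induce_range_iff]⟩ (Finset.coe_subset.1 hLM)
  refine hR (Set.eq_univ_of_forall fun v => ?_)
  obtain ⟨w, hw⟩ := hL.le (hML v.2)
  exact (Subtype.ext hw : w.1 = v) ▸ w.2

end DeBruijnErdos

theorem exists_crossing_of_forall_exists {α β : Type*} [Finite α] {r : α → β → Prop} {T : Finset β}
    {A : Set α} (hA : A.Nonempty) (hT : ∀ t ∈ T, ∃ a ∈ A, r a t)
    (hr : ∀ a ∈ A, ∃ t ∈ T, ¬r a t) :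
    ∃ a ∈ A, ∃ d ∈ A, ∃ s ∈ T, ∃ t ∈ T, r a s ∧ ¬r a t ∧ r d t ∧ ¬r d s := by
  classical
  obtain ⟨a, haA, hmax⟩ :=
    Set.exists_max_image A (fun a => (T.filter (r a)).card) A.toFinite hA
  obtain ⟨t, ht, hat⟩ := hr a haA
  obtain ⟨d, hdA, hdt⟩ := hT t ht
  have hsub : ¬T.filter (r a) ⊆ T.filter (r d) := fun h =>
    hat (Finset.mem_filter.1 ((Finset.eq_of_subset_of_card_le h (hmax d hdA)).ge
      (Finset.mem_filter.2 ⟨ht, hdt⟩))).2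
  obtain ⟨s, hs, hds⟩ := Finset.not_subset.1 hsub
  rw [Finset.mem_filter] at hs
  exact ⟨a, haA, d, hdA, s, hs.1, t, ht, hs.2, hat, hdt,
    fun h => hds (Finset.mem_filter.2 ⟨hs.1, h⟩)⟩

section ExcludingTails

variable {G : SimpleGraph V} {M : Set V} {p y : V}

theorem IsTail.exists_isEar_of_isMaximumClique [Finite M] (ht : IsTail G M p y) (hB : BullFree G)
    (hM : IsPrimeGraph (G.induce M)) {T : Finset M} (hT : (G.induce M).IsMaximumClique T)
    (hyT : ∀ t ∈ T, ¬G.Adj y t) (hT' : ∀ t ∈ T, ∃ a : M, G.Adj y a ∧ G.Adj a t) :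
    ∃ a d : M, ∃ b ∈ T, ∃ c ∈ T, IsEar G y a b c d := by
  classical
  obtain ⟨m, hm, hym⟩ := ht.exists_adj
  have exists_not_adj : ∀ a ∈ {a : M | G.Adj y a}, ∃ t ∈ T, ¬(G.induce M).Adj a t := by
    intro a hya
    by_contra! hall
    have haT : a ∉ T := fun h => hyT a h hya
    have hclique : (G.induce M).IsClique (insert a T : Finset M) := by
      rw [Finset.coe_insert]
      exact hT.isClique.insert fun t htT _ => hall t htT
    have := hT.maximum _ hclique
    rw [Finset.card_insert_of_notMem haT] at this
    lia
  obtain ⟨a, hya, d, hyd, b, hb, c, hc, hab, hac, hdc, hdb⟩ :=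
    exists_crossing_of_forall_exists ⟨⟨m, hm⟩, hym⟩ hT' exists_not_adj
  exact ⟨a, d, b, hb, c, hc,
    { adj_ya := hya
      adj_yd := hyd
      not_adj_yb := hyT b hb
      not_adj_yc := hyT c hc
      adj_ab := hab
      adj_bc := hT.isClique hb hc fun h => hac (h ▸ hab)
      adj_cd := hdc.symm
      not_adj_ac := hac
      not_adj_ad := ht.not_adj_of_adj hB hM hyd hya
      not_adj_bd := fun h => hdb h.symm }⟩

theorem IsTail.isIndepSet_neighbors_union_far (ht : IsTail G M p y) (hP : P6Free G)
    (hB : BullFree G) (hM : IsPrimeGraph (G.induce M)) :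
    (G.induce M).IsIndepSet {m | ¬G.Adj y m → ∀ a : M, G.Adj y a → ¬G.Adj a m} := by
  intro u hu v hv huv hadj
  by_cases hyu : G.Adj y u <;> by_cases hyv : G.Adj y v
  · exact ht.isIndepSet_neighbors hB hM hyu hyv huv hadj
  · exact hv hyv u hyu hadj
  · exact hu hyu v hyv hadj.symm
  · exact ht.isIndepSet_far hP hM ⟨hyu, hu hyu⟩ ⟨hyv, hv hyv⟩ huv hadj

theorem IsTail.not_isMinimalImperfect [Finite M] (ht : IsTail G M p y) (hP : P6Free G)
    (hB : BullFree G) (hC : ∀ c, ¬IsInducedC5 (G.induce M) c) :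
    ¬IsMinimalImperfect (G.induce M) := by
  classical
  intro hH
  have hM := hH.isPrimeGraph
  obtain ⟨m, hm, hym⟩ := ht.exists_adj
  obtain ⟨T, hT, hTI⟩ := hH.exists_isMaximumClique_disjoint
    (ht.isIndepSet_neighbors_union_far hP hB hM) ⟨⟨m, hm⟩, fun h => absurd hym h⟩
  have hT' : ∀ t ∈ T, ¬G.Adj y t ∧ ∃ a : M, G.Adj y a ∧ G.Adj a t := fun t htT => by
    simpa only [Set.mem_ofPred_eq, not_forall, not_not, exists_prop] using
      Set.disjoint_left.1 hTI htT
  obtain ⟨a, d, b, hb, c, hc, hear⟩ := ht.exists_isEar_of_isMaximumClique hB hM hT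
    (fun t htT => (hT' t htT).1) fun t htT => (hT' t htT).2
  have hcard : 3 ≤ T.card := hH.three_le_card (hP.of_embedding (Embedding.induce M)) hC hT
  obtain ⟨w, hw, hwbc⟩ : ∃ w ∈ T, w ∉ ({b, c} : Finset M) :=
    Finset.exists_mem_notMem_of_card_lt_card (Finset.card_le_two.trans_lt hcard)
  rw [Finset.mem_insert, Finset.mem_singleton, not_or] at hwbc
  exact hear.not_isCompleteToPath ht hP hB hM hC w <|
    hear.isCompleteToPath_of_adj_second_third ht hB hM (hT.isClique hw hb hwbc.1)
      (hT.isClique hw hc hwbc.2)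

end ExcludingTails

theorem stmt14_general {W : Type*} (G : SimpleGraph V) (H : SimpleGraph W)
    (hP : P6Free G) (hB : BullFree G) (hPr : IsPrimeGraph G)
    (x : V) (φ : H ↪g G) (hx : ∀ w, ¬G.Adj x (φ w)) :
    IsPerfect H ∨ ∃ c : Fin 5 → W, IsInducedC5 H c := by
  by_contra! ⟨hH, hC₀⟩
  obtain ⟨M, hMφ, hM⟩ := exists_finset_isMinimalImperfect_of_not_isPerfect φ hH
  have hC : ∀ c, ¬IsInducedC5 (G.induce (M : Set V)) c := by
    intro c hc
    choose f hf using fun i => hMφ (c i).2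
    have hc' := (isInducedC5_embedding_comp_iff (Embedding.induce (M : Set V))).2 hc
    exact hC₀ f ((isInducedC5_embedding_comp_iff φ).1 ((funext hf : φ ∘ f = _) ▸ hc'))
  have hxM : ∀ m ∈ (M : Set V), ¬G.Adj x m := by
    intro m hm
    obtain ⟨w, rfl⟩ := hMφ hm
    exact hx w
  have hM₂ : (M : Set V).Nontrivial := by
    obtain ⟨T, hT⟩ := (G.induce (M : Set V)).maximumClique_exists
    have hcard := hM.three_le_card (hP.of_embedding (Embedding.induce (M : Set V))) hC hT
    obtain ⟨u, -, v, -, huv⟩ := Finset.one_lt_card.1 (Nat.lt_of_succ_lt hcard)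
    exact ⟨u, u.2, v, v.2, Subtype.coe_injective.ne huv⟩
  obtain ⟨p, y, ht⟩ := exists_isTail hPr hB hM.connected.preconnected hM₂ hxM
  exact ht.not_isMinimalImperfect hP hB hC hM

theorem stmt14 (G : SimpleGraph V)
    (hP : P6Free G) (hB : BullFree G) (hPr : IsPrimeGraph G)
    (x : V) (N : Set V) (hN : N = {v : V | v ≠ x ∧ ¬ G.Adj x v}) :
    ∀ K : (G.induce N).ConnectedComponent,
      IsPerfect ((G.induce N).induce K.supp) ∨
      ∃ c : Fin 5 → ↥N, (∀ i, c i ∈ K.supp) ∧ IsInducedC5 (G.induce N) c := by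
  intro K
  refine (stmt14_general G _ hP hB hPr x ((Embedding.induce N).comp (Embedding.induce K.supp))
    fun w => (hN.le w.1.2).2).imp_right fun ⟨c, hc⟩ => ?_
  exact ⟨_, fun i => (c i).2, (isInducedC5_embedding_comp_iff (Embedding.induce K.supp)).2 hc⟩
end
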